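/- arXiv:2202.00992 — 3 statements merged into one kernel-verified Lean document; each statement's English description precedes it below -/
import Mathlib

section
/- Let ζ>0, ν>0, Λ>0 and a > max(0, ζ-1/2), and set S(ζ,a) = ((4a+5)²/2)^ζ · [1 + (ζ/(a+1/2-ζ)) · 2^{2a+2}Γ(a+1)²/(π(4a+5)^{2a+1})]. Let ρ be a finite Borel measure supported on [0,1] with ρ({0})=0 and ρ((0,λ]) ≤ λ^ζ for all λ ∈ [0,1], and suppose there is a nonincreasing sequence λ_1 ≥ λ_2 ≥ … > 0 with λ_k ≤ Λ·k^{-ν} for all k ≥ 1 such that ρ is supported on the set {λ_k : k ≥ 1}. Then there exists C > 0 such that for all n ≥ 2, the infimum over all real polynomials q with deg q ≤ n and q(0)=1 of (1/2)∫_{[0,1]} q(λ)² ρ(dλ) is at most (1/2)·S(ζ,a)·Λ^ζ·(n/2)^{-(2+ν)ζ}·(1 + C/n). -/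
open MeasureTheory Filter Set Polynomial

/-!
Put `b = Λ (m+1)^(-ν)` with `m = ⌊n/2⌋`. At most `m` of the eigenvalues exceed `b`, and we spend
`m` degrees on the factors `1 - λ/λ_k` that annihilate them. The remaining degrees go to a `k`-th
power of the Dirichlet kernel `P_M`, rescaled to `[0, b]`: since
`P_M(sin² φ) = sin ((2M+1)φ) / ((2M+1) sin φ)`, we have `P_M(0) = 1`, and `|P_M| ≤ 1` and
`x P_M(x)² ≤ (2M+1)⁻²` on `[0, 1]`. The resulting residual polynomial satisfies
`q(λ)² ≤ min(1, (x/λ)^k)` with `x = b / (2M+1)²`, and integrating this against a measure with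
`ρ((0, λ]) ≤ λ^ζ` gives `x^ζ · k / (k - ζ)` by the layer cake formula. For `k = ⌊ζ⌋ + 2` the
resulting constant `k^(2ζ) · k / (k - ζ)` is at most `(e k²)^ζ ≤ ((4a+5)²/2)^ζ`.
-/

section DirichletKernel

/-- The normalized Dirichlet kernel `(2M+1)⁻¹ ∑_{|j| ≤ M} T_j`, as a residual polynomial on `[0, 1]`
through the substitution `1 - 2x`. The index `j` is encoded as `i - M` with `i < 2M + 1`, which lets
trigonometric sums telescope over `Finset.range`. -/
noncomputable def dirichletPoly (M : ℕ) : ℝ[X] :=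
  C (2 * (M : ℝ) + 1)⁻¹ *
    (∑ i ∈ Finset.range (2 * M + 1), Chebyshev.T ℝ ((i : ℤ) - M)).comp (1 - C 2 * X)

lemma natDegree_dirichletPoly_le (M : ℕ) : (dirichletPoly M).natDegree ≤ M := by
  have hsum : (∑ i ∈ Finset.range (2 * M + 1), Chebyshev.T ℝ ((i : ℤ) - M)).natDegree ≤ M := by
    refine natDegree_sum_le_of_forall_le _ _ fun i hi ↦ ?_
    have := Finset.mem_range.1 hi
    rw [Chebyshev.natDegree_T]
    lia
  have hlin : (1 - C 2 * X : ℝ[X]).natDegree ≤ 1 := by compute_degree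
  calc (dirichletPoly M).natDegree
      ≤ _ := (natDegree_C_mul_le _ _).trans natDegree_comp_le
    _ ≤ M * 1 := Nat.mul_le_mul hsum hlin
    _ = M := mul_one M

lemma eval_dirichletPoly (M : ℕ) (x : ℝ) :
    (dirichletPoly M).eval x = (2 * (M : ℝ) + 1)⁻¹ *
      ∑ i ∈ Finset.range (2 * M + 1), (Chebyshev.T ℝ ((i : ℤ) - M)).eval (1 - 2 * x) := by
  simp [dirichletPoly, eval_comp, eval_finsetSum]

lemma eval_zero_dirichletPoly (M : ℕ) : (dirichletPoly M).eval 0 = 1 := by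
  have : 2 * (M : ℝ) + 1 ≠ 0 := by positivity
  simp [eval_dirichletPoly, this]

lemma abs_eval_dirichletPoly_le_one (M : ℕ) {x : ℝ} (hx : x ∈ Icc (0 : ℝ) 1) :
    |(dirichletPoly M).eval x| ≤ 1 := by
  have hx' : |1 - 2 * x| ≤ 1 := abs_le.2 ⟨by linarith [hx.2], by linarith [hx.1]⟩
  have hpos : 0 < 2 * (M : ℝ) + 1 := by positivity
  rw [eval_dirichletPoly, abs_mul, abs_inv, abs_of_pos hpos, inv_mul_le_one₀ hpos]
  calc |∑ i ∈ Finset.range (2 * M + 1), (Chebyshev.T ℝ ((i : ℤ) - M)).eval (1 - 2 * x)|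
      ≤ ∑ _i ∈ Finset.range (2 * M + 1), (1 : ℝ) :=
        (Finset.abs_sum_le_sum_abs _ _).trans
          (Finset.sum_le_sum fun _ _ ↦ Chebyshev.abs_eval_T_real_le_one _ hx')
    _ = 2 * M + 1 := by simp

lemma sin_mul_sum_cos (M : ℕ) (φ : ℝ) :
    Real.sin φ * ∑ i ∈ Finset.range (2 * M + 1), Real.cos (((i : ℝ) - M) * (2 * φ)) =
      Real.sin ((2 * M + 1) * φ) := by
  let s (i : ℕ) : ℝ := Real.sin ((2 * i - (2 * M + 1)) * φ)
  have htel (i : ℕ) : 2 * Real.sin φ * Real.cos (((i : ℝ) - M) * (2 * φ)) = s (i + 1) - s i := by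
    simp only [s]
    rw [Real.two_mul_sin_mul_cos, ← neg_sub (_ * (2 * φ)) φ, Real.sin_neg, neg_add_eq_sub]
    push_cast
    ring_nf
  have hsum : 2 * (Real.sin φ * ∑ i ∈ Finset.range (2 * M + 1),
      Real.cos (((i : ℝ) - M) * (2 * φ))) = s (2 * M + 1) - s 0 := by
    rw [← mul_assoc, Finset.mul_sum, Finset.sum_congr rfl fun i _ ↦ htel i, Finset.sum_range_sub]
  have hlast : s (2 * M + 1) = Real.sin ((2 * M + 1) * φ) := by
    simp only [s]
    push_cast
    ring_nf
  have hfirst : s 0 = -Real.sin ((2 * M + 1) * φ) := by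
    simp only [s]
    rw [← Real.sin_neg]
    push_cast
    ring_nf
  linarith

lemma sin_mul_eval_dirichletPoly (M : ℕ) (φ : ℝ) :
    Real.sin φ * (dirichletPoly M).eval (Real.sin φ ^ 2) =
      (2 * (M : ℝ) + 1)⁻¹ * Real.sin ((2 * M + 1) * φ) := by
  have hcos : 1 - 2 * Real.sin φ ^ 2 = Real.cos (2 * φ) := by
    rw [Real.cos_two_mul, Real.cos_sq']
    ring
  rw [eval_dirichletPoly, hcos, ← sin_mul_sum_cos]
  simp only [Chebyshev.T_real_cos, Int.cast_sub, Int.cast_natCast]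
  ring

lemma mul_eval_dirichletPoly_sq_le (M : ℕ) {x : ℝ} (hx : x ∈ Icc (0 : ℝ) 1) :
    x * (dirichletPoly M).eval x ^ 2 ≤ ((2 * (M : ℝ) + 1) ^ 2)⁻¹ := by
  obtain ⟨φ, rfl⟩ : ∃ φ, Real.sin φ ^ 2 = x :=
    ⟨Real.arcsin (√x), by
      rw [Real.sin_arcsin (by linarith [Real.sqrt_nonneg x]) (Real.sqrt_le_one.2 hx.2),
        Real.sq_sqrt hx.1]⟩
  rw [← mul_pow, sin_mul_eval_dirichletPoly, mul_pow, inv_pow]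
  exact mul_le_of_le_one_right (by positivity) (Real.sin_sq_le_one _)

end DirichletKernel

section ResidualPolynomial

/-- The residual polynomial that deflates the finite set `s` of eigenvalues exactly and damps the
remaining spectrum in `[0, b]` by the `k`-th power of the Dirichlet kernel rescaled to `[0, b]`. -/
noncomputable def deflationPoly (s : Finset ℝ) (b : ℝ) (M k : ℕ) : ℝ[X] :=
  (∏ μ ∈ s, (1 - C μ⁻¹ * X)) * (dirichletPoly M).comp (C b⁻¹ * X) ^ k

variable (s : Finset ℝ) (b : ℝ) (M k : ℕ)

lemma natDegree_deflationPoly_le : (deflationPoly s b M k).natDegree ≤ s.card + k * M := by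
  have hprod : (∏ μ ∈ s, (1 - C μ⁻¹ * X : ℝ[X])).natDegree ≤ s.card :=
    (natDegree_prod_le _ _).trans <|
      (Finset.sum_le_card_nsmul _ _ 1 fun μ _ ↦ by compute_degree).trans (by simp)
  have hlin : (C b⁻¹ * X : ℝ[X]).natDegree ≤ 1 := by compute_degree
  have hcomp : ((dirichletPoly M).comp (C b⁻¹ * X)).natDegree ≤ M :=
    (natDegree_comp_le.trans (Nat.mul_le_mul (natDegree_dirichletPoly_le M) hlin)).trans_eq
      (mul_one M)
  exact natDegree_mul_le_of_le hprod (natDegree_pow_le_of_le k hcomp)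

lemma eval_deflationPoly (x : ℝ) : (deflationPoly s b M k).eval x =
    (∏ μ ∈ s, (1 - μ⁻¹ * x)) * (dirichletPoly M).eval (b⁻¹ * x) ^ k := by
  simp [deflationPoly, eval_prod, eval_comp]

lemma eval_zero_deflationPoly : (deflationPoly s b M k).eval 0 = 1 := by
  simp [eval_deflationPoly, eval_zero_dirichletPoly]

variable {s b}

lemma eval_deflationPoly_of_mem {x : ℝ} (hx : x ∈ s) (hx0 : x ≠ 0) :
    (deflationPoly s b M k).eval x = 0 := by
  rw [eval_deflationPoly, Finset.prod_eq_zero hx (by simp [hx0]), zero_mul]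

lemma eval_deflationPoly_sq_le (hs : ∀ μ ∈ s, b ≤ μ) {x : ℝ} (hx : x ∈ Ioc 0 b) :
    (deflationPoly s b M k).eval x ^ 2 ≤ min 1 ((b / (2 * (M : ℝ) + 1) ^ 2 / x) ^ k) := by
  obtain ⟨hx0, hxb⟩ := hx
  have hb : 0 < b := hx0.trans_le hxb
  have hscale : ∀ μ, b ≤ μ → μ⁻¹ * x ∈ Icc (0 : ℝ) 1 := fun μ hμ ↦
    have hμ0 : 0 < μ := hb.trans_le hμ
    ⟨by positivity, (inv_mul_le_one₀ hμ0).2 (hxb.trans hμ)⟩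
  have hprod : (∏ μ ∈ s, (1 - μ⁻¹ * x)) ^ 2 ≤ 1 := by
    refine pow_le_one₀ (Finset.prod_nonneg fun μ hμ ↦ ?_) (Finset.prod_le_one ?_ ?_)
    · linarith [(hscale μ (hs μ hμ)).2]
    · exact fun μ hμ ↦ by linarith [(hscale μ (hs μ hμ)).2]
    · exact fun μ hμ ↦ by linarith [(hscale μ (hs μ hμ)).1]
  set P := (dirichletPoly M).eval (b⁻¹ * x)
  have hP : P ^ 2 ≤ 1 :=
    (sq_le_one_iff_abs_le_one P).2 (abs_eval_dirichletPoly_le_one M (hscale b le_rfl))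
  have hdecay : P ^ 2 ≤ b / (2 * (M : ℝ) + 1) ^ 2 / x := by
    rw [le_div_iff₀ hx0, div_eq_mul_inv]
    calc P ^ 2 * x = b * (b⁻¹ * x * P ^ 2) := by field_simp
      _ ≤ b * ((2 * (M : ℝ) + 1) ^ 2)⁻¹ := by
        gcongr
        exact mul_eval_dirichletPoly_sq_le M (hscale b le_rfl)
  calc (deflationPoly s b M k).eval x ^ 2
      = (∏ μ ∈ s, (1 - μ⁻¹ * x)) ^ 2 * (P ^ 2) ^ k := by
        rw [eval_deflationPoly]
        ring
    _ ≤ (P ^ 2) ^ k := mul_le_of_le_one_left (by positivity) hprod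
    _ ≤ min 1 ((b / (2 * (M : ℝ) + 1) ^ 2 / x) ^ k) :=
        le_min (pow_le_one₀ (by positivity) hP) (by gcongr)

end ResidualPolynomial

section PowerLaw

lemma setLIntegral_Ioc_zero_one_rpow_neg {c r : ℝ} (hc : 0 ≤ c) (hr : r < 1) :
    ∫⁻ t in Ioc (0 : ℝ) 1, ENNReal.ofReal (c * t ^ (-r)) = ENNReal.ofReal (c / (1 - r)) := by
  have hint : IntegrableOn (fun t : ℝ ↦ c * t ^ (-r)) (Ioc 0 1) :=
    ((intervalIntegrable_iff_integrableOn_Ioc_of_le zero_le_one).1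
      (intervalIntegral.intervalIntegrable_rpow' (by linarith))).const_mul c
  rw [← ofReal_integral_eq_lintegral_ofReal hint, ← intervalIntegral.integral_of_le zero_le_one,
    intervalIntegral.integral_const_mul, integral_rpow (Or.inl (by linarith)), Real.one_rpow,
    Real.zero_rpow (by linarith), sub_zero, neg_add_eq_sub, mul_one_div]
  filter_upwards [ae_restrict_mem measurableSet_Ioc] with t ht
  have := ht.1
  positivity

lemma lintegral_ofReal_le_of_measure_le_rpow {α : Type*} [MeasurableSpace α] {μ : Measure α}
    {f : α → ℝ} (hf : AEMeasurable f μ) (hf0 : 0 ≤ᵐ[μ] f) (hf1 : ∀ x, f x ≤ 1) {c r : ℝ}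
    (hc : 0 ≤ c) (hr : r < 1)
    (hμ : ∀ t ∈ Ioc (0 : ℝ) 1, μ {x | t ≤ f x} ≤ ENNReal.ofReal (c * t ^ (-r))) :
    ∫⁻ x, ENNReal.ofReal (f x) ∂μ ≤ ENNReal.ofReal (c / (1 - r)) := by
  have hzero : ∫⁻ t in Ioi (1 : ℝ), μ {x | t ≤ f x} = 0 :=
    setLIntegral_eq_zero measurableSet_Ioi fun t ht ↦ by
      simp [fun x ↦ ((hf1 x).trans_lt ht).not_ge]
  calc ∫⁻ x, ENNReal.ofReal (f x) ∂μ
      = ∫⁻ t in Ioi (0 : ℝ), μ {x | t ≤ f x} := lintegral_eq_lintegral_meas_le μ hf0 hf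
    _ = ∫⁻ t in Ioc (0 : ℝ) 1, μ {x | t ≤ f x} := by
        rw [← Ioc_union_Ioi_eq_Ioi zero_le_one,
          lintegral_union measurableSet_Ioi (Ioc_disjoint_Ioi le_rfl), hzero, add_zero]
    _ ≤ ∫⁻ t in Ioc (0 : ℝ) 1, ENNReal.ofReal (c * t ^ (-r)) :=
        setLIntegral_mono' measurableSet_Ioc hμ
    _ = ENNReal.ofReal (c / (1 - r)) := setLIntegral_Ioc_zero_one_rpow_neg hc hr

lemma le_mul_rpow_neg_inv_of_le_div_rpow {t x y p : ℝ} (ht : 0 < t) (hx : 0 ≤ x) (hy : 0 < y)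
    (hp : 0 < p) (h : t ≤ (x / y) ^ p) : y ≤ x * t ^ (-p⁻¹) := by
  have hroot : t ^ p⁻¹ ≤ x / y := (Real.rpow_inv_le_iff_of_pos ht.le (by positivity) hp).2 h
  rw [Real.rpow_neg ht.le, ← div_eq_mul_inv, le_div_iff₀ (by positivity), mul_comm]
  exact (le_div_iff₀ hy).1 hroot

variable {ρ : Measure ℝ} {ζ : ℝ}

lemma setLIntegral_min_one_div_rpow_le (hζ : 0 ≤ ζ)
    (hpow : ∀ l ∈ Ioc (0 : ℝ) 1, ρ (Ioc 0 l) ≤ ENNReal.ofReal (l ^ ζ))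
    {x p : ℝ} (hx : 0 < x) (hp : ζ < p) :
    ∫⁻ l in Ioc (0 : ℝ) 1, ENNReal.ofReal (min 1 ((x / l) ^ p)) ∂ρ ≤
      ENNReal.ofReal (x ^ ζ * (p / (p - ζ))) := by
  have hp0 : 0 < p := hζ.trans_lt hp
  have hconst : x ^ ζ * (p / (p - ζ)) = x ^ ζ / (1 - ζ / p) := by
    rw [one_sub_div hp0.ne', div_div_eq_mul_div, mul_div_assoc]
  rw [hconst]
  refine lintegral_ofReal_le_of_measure_le_rpow (Measurable.aemeasurable (by fun_prop)) ?_
    (fun l ↦ min_le_left _ _) (by positivity) ((div_lt_one hp0).2 hp) fun t ht ↦ ?_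
  · filter_upwards [ae_restrict_mem measurableSet_Ioc] with l hl
    have := hl.1
    exact le_min zero_le_one (by positivity)
  · have ht0 : 0 < t := ht.1
    set y := x * t ^ (-p⁻¹) with hy
    have : 0 < y := by positivity
    have hsub : {l | t ≤ min 1 ((x / l) ^ p)} ∩ Ioc 0 1 ⊆ Ioc 0 (min y 1) := fun l ⟨hl, hl01⟩ ↦
      ⟨hl01.1, le_min (le_mul_rpow_neg_inv_of_le_div_rpow ht0 hx.le hl01.1 hp0
        (hl.trans (min_le_right _ _))) hl01.2⟩
    calc ρ.restrict (Ioc 0 1) {l | t ≤ min 1 ((x / l) ^ p)}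
        ≤ ρ (Ioc 0 (min y 1)) := by
          rw [Measure.restrict_apply' measurableSet_Ioc]
          exact measure_mono hsub
      _ ≤ ENNReal.ofReal (min y 1 ^ ζ) := hpow _ ⟨by positivity, min_le_right _ _⟩
      _ ≤ ENNReal.ofReal (y ^ ζ) := by
          gcongr
          exact min_le_left _ _
      _ = ENNReal.ofReal (x ^ ζ * t ^ (-(ζ / p))) := by
          rw [hy, Real.mul_rpow hx.le (by positivity), ← Real.rpow_mul ht0.le]
          ring_nf

end PowerLaw

section ConjugateGradients

/-- The loss of `n` steps of Conjugate Gradients on a quadratic problem with spectral measure `ρ`,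
through its variational characterization over residual polynomials. The degree is measured by
`natDegree`, and only the part of `ρ` on `[0, 1]` enters. -/
noncomputable def cgLoss (ρ : Measure ℝ) (n : ℕ) : ℝ :=
  sInf {L : ℝ | ∃ q : ℝ[X], q.natDegree ≤ n ∧ q.eval 0 = 1 ∧
    L = (1 / 2) * ∫ l in Icc (0 : ℝ) 1, q.eval l ^ 2 ∂ρ}

variable {ρ : Measure ℝ} {ζ : ℝ} {n : ℕ}

lemma cgLoss_le {q : ℝ[X]} (hdeg : q.natDegree ≤ n) (hq : q.eval 0 = 1) :
    cgLoss ρ n ≤ (1 / 2) * ∫ l in Icc (0 : ℝ) 1, q.eval l ^ 2 ∂ρ := by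
  refine csInf_le ⟨0, ?_⟩ ⟨q, hdeg, hq, rfl⟩
  rintro L ⟨q, -, -, rfl⟩
  have : 0 ≤ ∫ l in Icc (0 : ℝ) 1, q.eval l ^ 2 ∂ρ := integral_nonneg fun l ↦ sq_nonneg _
  positivity

lemma cgLoss_le_of_sq_le_min (hζ : 0 ≤ ζ) (h0 : ρ {0} = 0)
    (hpow : ∀ l ∈ Ioc (0 : ℝ) 1, ρ (Ioc 0 l) ≤ ENNReal.ofReal (l ^ ζ))
    {q : ℝ[X]} (hdeg : q.natDegree ≤ n) (hq : q.eval 0 = 1) {x p : ℝ} (hx : 0 < x) (hp : ζ < p)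
    (hle : ∀ᵐ l ∂ρ.restrict (Ioc 0 1), q.eval l ^ 2 ≤ min 1 ((x / l) ^ p)) :
    cgLoss ρ n ≤ (1 / 2) * (x ^ ζ * (p / (p - ζ))) := by
  have hbound : 0 ≤ x ^ ζ * (p / (p - ζ)) := by
    have := hζ.trans_lt hp
    have := sub_pos.2 hp
    positivity
  refine (cgLoss_le hdeg hq).trans ?_
  gcongr
  rw [integral_Icc_eq_integral_Ioc' h0, integral_eq_lintegral_of_nonneg_ae
    (ae_of_all _ fun l ↦ sq_nonneg _) (by fun_prop)]
  refine ENNReal.toReal_le_of_le_ofReal hbound ?_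
  calc ∫⁻ l in Ioc (0 : ℝ) 1, ENNReal.ofReal (q.eval l ^ 2) ∂ρ
      ≤ ∫⁻ l in Ioc (0 : ℝ) 1, ENNReal.ofReal (min 1 ((x / l) ^ p)) ∂ρ :=
        lintegral_mono_ae (hle.mono fun l hl ↦ ENNReal.ofReal_le_ofReal hl)
    _ ≤ ENNReal.ofReal (x ^ ζ * (p / (p - ζ))) := setLIntegral_min_one_div_rpow_le hζ hpow hx hp

lemma cgLoss_le_of_deflation (hζ : 0 ≤ ζ) (h0 : ρ {0} = 0)
    (hpow : ∀ l ∈ Ioc (0 : ℝ) 1, ρ (Ioc 0 l) ≤ ENNReal.ofReal (l ^ ζ))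
    {s : Finset ℝ} {b : ℝ} (hb : 0 < b) (hs : ∀ μ ∈ s, b ≤ μ) (hρ : ∀ᵐ l ∂ρ, l ≤ b ∨ l ∈ s)
    {M k : ℕ} (hk : ζ < k) (hdeg : s.card + k * M ≤ n) :
    cgLoss ρ n ≤ (1 / 2) * ((b / (2 * (M : ℝ) + 1) ^ 2) ^ ζ * (k / (k - ζ))) := by
  refine cgLoss_le_of_sq_le_min hζ h0 hpow ((natDegree_deflationPoly_le s b M k).trans hdeg)
    (eval_zero_deflationPoly s b M k) (by positivity) hk ?_
  filter_upwards [ae_restrict_of_ae hρ, ae_restrict_mem measurableSet_Ioc] with l hl hl01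
  have hl0 : 0 < l := hl01.1
  rw [Real.rpow_natCast]
  rcases hl with hlb | hls
  · exact eval_deflationPoly_sq_le M k hs ⟨hl0, hlb⟩
  · rw [eval_deflationPoly_of_mem M k hls hl0.ne', zero_pow two_ne_zero]
    exact le_min zero_le_one (by positivity)

variable {ν Λ : ℝ} {lam : ℕ → ℝ}

lemma cgLoss_le_of_eigenvalue_decay (hζ : 0 ≤ ζ) (hν : 0 ≤ ν) (hΛ : 0 < Λ) (h0 : ρ {0} = 0)
    (hpow : ∀ l ∈ Ioc (0 : ℝ) 1, ρ (Ioc 0 l) ≤ ENNReal.ofReal (l ^ ζ))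
    (hlam : ∀ j : ℕ, lam j ≤ Λ * ((j : ℝ) + 1) ^ (-ν)) (hatom : ρ (range lam)ᶜ = 0)
    {m M k : ℕ} (hk : ζ < k) (hdeg : m + k * M ≤ n) :
    cgLoss ρ n ≤ (1 / 2) *
      ((Λ * ((m : ℝ) + 1) ^ (-ν) / (2 * (M : ℝ) + 1) ^ 2) ^ ζ * (k / (k - ζ))) := by
  set b := Λ * ((m : ℝ) + 1) ^ (-ν)
  have htail : ∀ j, m ≤ j → lam j ≤ b := fun j hj ↦
    (hlam j).trans <| mul_le_mul_of_nonneg_left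
      (Real.rpow_le_rpow_of_nonpos (by positivity) (by gcongr) (neg_nonpos.2 hν)) hΛ.le
  let s : Finset ℝ := ((Finset.range m).image lam).filter (b < ·)
  have hcard : s.card ≤ m :=
    ((Finset.card_filter_le _ _).trans Finset.card_image_le).trans_eq (Finset.card_range m)
  refine cgLoss_le_of_deflation (s := s) hζ h0 hpow (by positivity)
    (fun μ hμ ↦ (Finset.mem_filter.1 hμ).2.le) ?_ hk (by lia)
  filter_upwards [mem_ae_iff.2 hatom] with l ⟨j, hj⟩
  subst hj
  refine or_iff_not_imp_left.2 fun hj ↦ Finset.mem_filter.2 ⟨?_, not_le.1 hj⟩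
  exact Finset.mem_image_of_mem lam (Finset.mem_range.2 (not_le.1 fun h ↦ hj (htail j h)))

lemma decay_div_sq_le (hν : 0 ≤ ν) (hΛ : 0 ≤ Λ) {m M k r : ℝ} (hr : 0 < r) (hm : r ≤ m + 1)
    (hM : 0 ≤ M) (hrM : r ≤ k * (2 * M + 1)) :
    Λ * (m + 1) ^ (-ν) / (2 * M + 1) ^ 2 ≤ k ^ 2 * (Λ * r ^ (-(2 + ν))) := by
  have hsplit : r ^ (-(2 + ν)) = r ^ (-ν) / r ^ 2 := by
    rw [neg_add', ← Real.rpow_two, ← Real.rpow_sub hr]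
    ring_nf
  have hpow : (m + 1) ^ (-ν) ≤ r ^ (-ν) := Real.rpow_le_rpow_of_nonpos hr hm (neg_nonpos.2 hν)
  rw [hsplit, div_le_iff₀ (by positivity)]
  calc Λ * (m + 1) ^ (-ν) ≤ Λ * r ^ (-ν) := by gcongr
    _ = Λ * (r ^ (-ν) / r ^ 2) * r ^ 2 := by field_simp
    _ ≤ Λ * (r ^ (-ν) / r ^ 2) * (k * (2 * M + 1)) ^ 2 := by gcongr
    _ = k ^ 2 * (Λ * (r ^ (-ν) / r ^ 2)) * (2 * M + 1) ^ 2 := by ring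

theorem cg_discrete_spectrum_upper_bound_general (hζ : 0 ≤ ζ) (hν : 0 ≤ ν) (hΛ : 0 < Λ)
    (h0 : ρ {0} = 0) (hpow : ∀ l ∈ Ioc (0 : ℝ) 1, ρ (Ioc 0 l) ≤ ENNReal.ofReal (l ^ ζ))
    (hlam : ∀ j : ℕ, lam j ≤ Λ * ((j : ℝ) + 1) ^ (-ν)) (hatom : ρ (range lam)ᶜ = 0)
    {k : ℕ} (hk : ζ < k) (hn : 0 < n) :
    cgLoss ρ n ≤ (1 / 2) * ((k : ℝ) ^ (2 * ζ) * (k / (k - ζ))) * Λ ^ ζ *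
      ((n : ℝ) / 2) ^ (-((2 + ν) * ζ)) := by
  have hkpos : 0 < k := by exact_mod_cast hζ.trans_lt hk
  have : 0 < k - ζ := sub_pos.2 hk
  obtain ⟨m, M, hdeg, hm, hM⟩ : ∃ m M : ℕ,
      m + k * M ≤ n ∧ n ≤ 2 * (m + 1) ∧ n ≤ 2 * (k * (M + 1)) := by
    refine ⟨n / 2, (n - n / 2) / k, ?_, by lia, ?_⟩
    · have := Nat.mul_div_le (n - n / 2) k
      lia
    · have := Nat.lt_mul_div_succ (n - n / 2) hkpos
      lia
  have hmR : (n : ℝ) / 2 ≤ m + 1 := by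
    have : (n : ℝ) ≤ 2 * (m + 1) := by exact_mod_cast hm
    linarith
  have hMR : (n : ℝ) / 2 ≤ k * (2 * M + 1) := by
    have : (n : ℝ) ≤ 2 * (k * (M + 1)) := by exact_mod_cast hM
    have : (0 : ℝ) ≤ k * M := by positivity
    linarith
  calc cgLoss ρ n
      ≤ (1 / 2) * ((Λ * ((m : ℝ) + 1) ^ (-ν) / (2 * (M : ℝ) + 1) ^ 2) ^ ζ * (k / (k - ζ))) :=
        cgLoss_le_of_eigenvalue_decay hζ hν hΛ h0 hpow hlam hatom hk hdeg
    _ ≤ (1 / 2) * (((k : ℝ) ^ 2 * (Λ * ((n : ℝ) / 2) ^ (-(2 + ν)))) ^ ζ * (k / (k - ζ))) := by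
        gcongr
        exact decay_div_sq_le hν hΛ.le (by positivity) hmR (by positivity) hMR
    _ = _ := by
        rw [Real.mul_rpow (by positivity) (by positivity), Real.mul_rpow hΛ.le (by positivity),
          ← Real.rpow_natCast_mul (by positivity), ← Real.rpow_mul (by positivity)]
        push_cast
        ring_nf

end ConjugateGradients

section Constants

lemma rpow_mul_div_sub_le_exp_one_mul_sq_rpow {ζ k : ℝ} (hζ : 0 ≤ ζ) (hk : ζ + 1 ≤ k) :
    k ^ (2 * ζ) * (k / (k - ζ)) ≤ (Real.exp 1 * k ^ 2) ^ ζ := by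
  have hk0 : 0 ≤ k := by linarith
  have hfrac : k / (k - ζ) ≤ Real.exp 1 ^ ζ := calc
    k / (k - ζ) ≤ ζ + 1 := by
      rw [div_le_iff₀ (by linarith)]
      nlinarith [mul_nonneg hζ (sub_nonneg.2 hk)]
    _ ≤ Real.exp 1 ^ ζ := by
      rw [Real.exp_one_rpow]
      exact Real.add_one_le_exp ζ
  calc k ^ (2 * ζ) * (k / (k - ζ)) ≤ k ^ (2 * ζ) * Real.exp 1 ^ ζ := by gcongr
    _ = (Real.exp 1 * k ^ 2) ^ ζ := by
      rw [Real.mul_rpow (by positivity) (by positivity), ← Real.rpow_natCast_mul hk0, mul_comm]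
      norm_num

lemma exp_one_mul_floor_add_two_sq_le {ζ a : ℝ} (hζ : 0 ≤ ζ) (ha : max 0 (ζ - 1 / 2) ≤ a) :
    Real.exp 1 * ((⌊ζ⌋₊ : ℝ) + 2) ^ 2 ≤ (4 * a + 5) ^ 2 / 2 := by
  obtain ⟨ha0, haζ⟩ := max_le_iff.1 ha
  have hfloor : (⌊ζ⌋₊ : ℝ) ≤ ζ := Nat.floor_le hζ
  have hlin : 7 / 3 * ((⌊ζ⌋₊ : ℝ) + 2) ≤ 4 * a + 5 := by
    rcases Nat.eq_zero_or_pos ⌊ζ⌋₊ with h | h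
    · rw [h]
      norm_num
      linarith
    · have : (1 : ℝ) ≤ ⌊ζ⌋₊ := by exact_mod_cast h
      linarith
  have hexp : 2 * Real.exp 1 ≤ (7 / 3) ^ 2 := by linarith [Real.exp_one_lt_d9]
  calc Real.exp 1 * ((⌊ζ⌋₊ : ℝ) + 2) ^ 2 = 2 * Real.exp 1 * ((⌊ζ⌋₊ : ℝ) + 2) ^ 2 / 2 := by ring
    _ ≤ (7 / 3) ^ 2 * ((⌊ζ⌋₊ : ℝ) + 2) ^ 2 / 2 := by gcongr
    _ = (7 / 3 * ((⌊ζ⌋₊ : ℝ) + 2)) ^ 2 / 2 := by ring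
    _ ≤ (4 * a + 5) ^ 2 / 2 := by gcongr

/-- The constant `S(ζ, a)` of the upper bound. -/
noncomputable def decayConstant (ζ a : ℝ) : ℝ :=
  ((4 * a + 5) ^ 2 / 2) ^ ζ *
    (1 + (ζ / (a + 1 / 2 - ζ)) *
      ((2 : ℝ) ^ (2 * a + 2) * Real.Gamma (a + 1) ^ 2 / (Real.pi * (4 * a + 5) ^ (2 * a + 1))))

lemma rpow_le_decayConstant {ζ a : ℝ} (hζ : 0 ≤ ζ) (ha : max 0 (ζ - 1 / 2) ≤ a) :
    ((4 * a + 5) ^ 2 / 2) ^ ζ ≤ decayConstant ζ a := by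
  obtain ⟨ha0, haζ⟩ := max_le_iff.1 ha
  have : 0 ≤ a + 1 / 2 - ζ := by linarith
  exact le_mul_of_one_le_right (by positivity) (le_add_of_nonneg_right (by positivity))

lemma decayConstant_nonneg {ζ a : ℝ} (hζ : 0 ≤ ζ) (ha : max 0 (ζ - 1 / 2) ≤ a) :
    0 ≤ decayConstant ζ a :=
  le_trans (by positivity) (rpow_le_decayConstant hζ ha)

lemma rpow_mul_div_sub_le_decayConstant {ζ a k : ℝ} (hζ : 0 ≤ ζ) (ha : max 0 (ζ - 1 / 2) ≤ a)
    (hk : k = ⌊ζ⌋₊ + 2) : k ^ (2 * ζ) * (k / (k - ζ)) ≤ decayConstant ζ a := by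
  subst hk
  calc _ ≤ (Real.exp 1 * ((⌊ζ⌋₊ : ℝ) + 2) ^ 2) ^ ζ :=
        rpow_mul_div_sub_le_exp_one_mul_sq_rpow hζ (by linarith [Nat.lt_floor_add_one ζ])
    _ ≤ ((4 * a + 5) ^ 2 / 2) ^ ζ := by
        gcongr
        exact exp_one_mul_floor_add_two_sq_le hζ ha
    _ ≤ decayConstant ζ a := rpow_le_decayConstant hζ ha

end Constants

/-- Conjugate Gradients under both the power-law spectral condition `ρ((0,λ]) ≤ λ^ζ`
and the eigenvalue decay condition (ρ supported on eigenvalues `λ_k ≤ Λ k^{-ν}`):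
the `n`-step CG loss is bounded by `(1/2) S(ζ,a) Λ^ζ (n/2)^{-(2+ν)ζ}(1+C/n)`.
Here `lam k` denotes the eigenvalue `λ_{k+1}`. -/
theorem cg_discrete_spectrum_upper_bound
    (ζ ν Λ a : ℝ) (hζ : 0 < ζ) (hν : 0 < ν) (hΛ : 0 < Λ)
    (ha : max 0 (ζ - 1/2) < a)
    (ρ : Measure ℝ) [IsFiniteMeasure ρ]
    (hsupp : ρ (Set.Icc (0:ℝ) 1)ᶜ = 0)
    (h0 : ρ {(0:ℝ)} = 0)
    (hpow : ∀ l ∈ Set.Icc (0:ℝ) 1, (ρ (Set.Ioc 0 l)).toReal ≤ l ^ ζ)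
    (lam : ℕ → ℝ)
    (hlampos : ∀ k, 0 < lam k)
    (hlammono : ∀ k, lam (k + 1) ≤ lam k)
    (hlamdecay : ∀ k : ℕ, lam k ≤ Λ * ((k : ℝ) + 1) ^ (-ν))
    (hatom : ρ (Set.range lam)ᶜ = 0) :
    ∃ C > (0:ℝ), ∀ n : ℕ, 2 ≤ n →
      sInf {L : ℝ | ∃ q : Polynomial ℝ, q.natDegree ≤ n ∧ q.eval 0 = 1 ∧
          L = (1/2) * ∫ l in Set.Icc (0:ℝ) 1, (q.eval l) ^ 2 ∂ρ} ≤
        (1/2) *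
          (((4 * a + 5) ^ 2 / 2) ^ ζ *
            (1 + (ζ / (a + 1/2 - ζ)) *
              ((2:ℝ) ^ (2 * a + 2) * Real.Gamma (a + 1) ^ 2 /
                (Real.pi * (4 * a + 5) ^ (2 * a + 1))))) *
          Λ ^ ζ * ((n : ℝ) / 2) ^ (-((2 + ν) * ζ)) * (1 + C / n) := by
  refine ⟨1, one_pos, fun n hn ↦ ?_⟩
  have hpow' (l : ℝ) (hl : l ∈ Ioc (0 : ℝ) 1) : ρ (Ioc 0 l) ≤ ENNReal.ofReal (l ^ ζ) :=
    ENNReal.le_ofReal_iff_toReal_le (measure_ne_top ρ _) (Real.rpow_nonneg hl.1.le ζ) |>.2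
      (hpow l (Ioc_subset_Icc_self hl))
  have hk : ζ < (⌊ζ⌋₊ + 2 : ℕ) := by
    push_cast
    linarith [Nat.lt_floor_add_one ζ]
  have hS : ((⌊ζ⌋₊ + 2 : ℕ) : ℝ) ^ (2 * ζ) * ((⌊ζ⌋₊ + 2 : ℕ) / ((⌊ζ⌋₊ + 2 : ℕ) - ζ)) ≤
      decayConstant ζ a := rpow_mul_div_sub_le_decayConstant hζ.le ha.le (by push_cast; rfl)
  have hS0 : 0 ≤ decayConstant ζ a := decayConstant_nonneg hζ.le ha.le
  calc cgLoss ρ n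
      ≤ _ := cg_discrete_spectrum_upper_bound_general hζ.le hν.le hΛ h0 hpow' hlamdecay hatom hk
        (by lia)
    _ ≤ (1 / 2) * decayConstant ζ a * Λ ^ ζ * ((n : ℝ) / 2) ^ (-((2 + ν) * ζ)) := by gcongr
    _ ≤ (1 / 2) * decayConstant ζ a * Λ ^ ζ * ((n : ℝ) / 2) ^ (-((2 + ν) * ζ)) * (1 + 1 / n) :=
        le_mul_of_one_le_right (by positivity) (le_add_of_nonneg_right (by positivity))
end

section
/- Let ρ be a finite Borel measure supported on [0,1] with ρ({0})=0. Define polynomials q_n and reals α_n recursively by q_0 = 1, α_n = (∫ λ q_n(λ)² ρ(dλ)) / (∫ λ² q_n(λ)² ρ(dλ)), q_{n+1}(λ) = (1-α_nλ)q_n(λ), and set L_n = (1/2)∫ q_n(λ)² ρ(dλ); assume ∫ λ² q_n(λ)² ρ(dλ) > 0 for every n. Suppose moreover that ∫_{[0,1]} λ^s ρ(dλ) < ∞ for some s < 0. Then for every n ≥ 0, L_n ≤ (L_0^{1/s} + c_s·n)^s, where c_s = (1/|s|)·((1/2)∫_{[0,1]} λ^s ρ(dλ))^{1/s}. -/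
open MeasureTheory Filter Set

/-! Write `W = ∫ q_n² dρ` and let `m = ∫ λ q_n² dρ / W` be the mean of `λ` under the weight
`q_n²`. Since `ρ` lives on `(0,1]` we have `α_n ≥ 1`, so a step multiplies the loss by at most
`1 - m`. Jensen's inequality bounds `m` from below in terms of `∫ λ^s q_n² dρ`, and this moment
never grows: the choice of `α_n` makes `∫ λ (λ - 1/α_n) q_n² dρ` vanish, so by Chebyshev's
association inequality weighting the integrand by the decreasing function `λ^s` makes the integral
nonpositive. What remains is the recursion `L_{n+1} ≤ L_n (1 - (J / L_n)^{1/s})` with the constant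
`J = (1/2) ∫ λ^s dρ`; it says that `L_n^{1/s}` grows at least linearly. -/

lemma one_add_mul_self_le_rpow_one_add_of_nonpos {x p : ℝ} (hx : -1 < x) (hp : p ≤ 0) :
    1 + p * x ≤ (1 + x) ^ p := by
  have hx' : 0 < 1 + x := by linarith
  have hlog : Real.log (1 + x) ≤ x := by linarith [Real.log_le_sub_one_of_pos hx']
  calc 1 + p * x ≤ Real.log (1 + x) * p + 1 := by
        linarith [mul_le_mul_of_nonpos_left hlog hp]
    _ ≤ Real.exp (Real.log (1 + x) * p) := Real.add_one_le_exp _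
    _ = (1 + x) ^ p := (Real.rpow_def_of_pos hx' p).symm

lemma mul_sub_le_mul_sub_of_antitoneOn {f : ℝ → ℝ} {S : Set ℝ} (hf : AntitoneOn f S) {x p : ℝ}
    (hx : x ∈ S) (hp : p ∈ S) : f x * (x - p) ≤ f p * (x - p) := by
  rcases le_total x p with hxp | hpx
  · exact mul_le_mul_of_nonpos_right (hf hx hp hxp) (sub_nonpos.mpr hxp)
  · exact mul_le_mul_of_nonneg_right (hf hp hx hpx) (sub_nonneg.mpr hpx)

section Recursion

variable {s J : ℝ}

lemma rpow_one_div_add_le_of_le_mul_one_sub {L L' : ℝ} (hs : s < 0) (hJ : 0 ≤ J) (hL : 0 < L)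
    (hL' : 0 < L') (h : L' ≤ L * (1 - (J / L) ^ (1 / s))) :
    L ^ (1 / s) + 1 / |s| * J ^ (1 / s) ≤ L' ^ (1 / s) := by
  have hs' : 1 / s ≤ 0 := (one_div_neg.mpr hs).le
  set t := (J / L) ^ (1 / s) with ht
  have ht1 : 0 < 1 - t := pos_of_mul_pos_right (hL'.trans_le h) hL.le
  have hJt : J ^ (1 / s) = L ^ (1 / s) * t := by
    rw [ht, ← Real.mul_rpow hL.le (div_nonneg hJ hL.le), mul_div_cancel₀ _ hL.ne']
  calc L ^ (1 / s) + 1 / |s| * J ^ (1 / s) = L ^ (1 / s) * (1 + 1 / s * -t) := by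
        rw [hJt, abs_of_neg hs, one_div_neg_eq_neg_one_div]; ring
    _ ≤ L ^ (1 / s) * (1 + -t) ^ (1 / s) := by
        gcongr
        exact one_add_mul_self_le_rpow_one_add_of_nonpos (by linarith) hs'
    _ = (L * (1 - t)) ^ (1 / s) := by rw [← sub_eq_add_neg, Real.mul_rpow hL.le ht1.le]
    _ ≤ L' ^ (1 / s) := Real.rpow_le_rpow_of_nonpos hL' h hs'

lemma le_rpow_of_forall_succ_le_mul_one_sub {L : ℕ → ℝ} (hs : s < 0) (hJ : 0 ≤ J)
    (hL : ∀ n, 0 < L n) (h : ∀ n, L (n + 1) ≤ L n * (1 - (J / L n) ^ (1 / s))) (n : ℕ) :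
    L n ≤ (L 0 ^ (1 / s) + 1 / |s| * J ^ (1 / s) * n) ^ s := by
  have hlinear : L 0 ^ (1 / s) + 1 / |s| * J ^ (1 / s) * n ≤ L n ^ (1 / s) := by
    induction n with
    | zero => simp
    | succ k ih =>
      have hstep := rpow_one_div_add_le_of_le_mul_one_sub hs hJ (hL k) (hL (k + 1)) (h k)
      push_cast
      linarith
  have hpos : 0 < L 0 ^ (1 / s) + 1 / |s| * J ^ (1 / s) * n :=
    add_pos_of_pos_of_nonneg (Real.rpow_pos_of_pos (hL 0) _) (by positivity)
  rw [one_div] at hlinear hpos ⊢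
  exact (Real.le_rpow_inv_iff_of_neg hpos (hL n) hs).mp hlinear

end Recursion

lemma rpow_mul_integral_le_integral_rpow_mul {Ω : Type*} [MeasurableSpace Ω] {μ : Measure Ω}
    {X w : Ω → ℝ} {m s : ℝ} (hs : s ≤ 0) (hm : 0 < m) (hX : ∀ᵐ ω ∂μ, 0 < X ω)
    (hw : ∀ᵐ ω ∂μ, 0 ≤ w ω) (hwi : Integrable w μ) (hXw : Integrable (fun ω => X ω * w ω) μ)
    (hXsw : Integrable (fun ω => X ω ^ s * w ω) μ)
    (hmean : ∫ ω, X ω * w ω ∂μ = m * ∫ ω, w ω ∂μ) :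
    m ^ s * ∫ ω, w ω ∂μ ≤ ∫ ω, X ω ^ s * w ω ∂μ := by
  have htangent : ∀ x, 0 < x → m ^ s * (1 - s) + m ^ s * s / m * x ≤ x ^ s := fun x hx => by
    have hbern : 1 + s * (x / m - 1) ≤ (x / m) ^ s := by
      simpa only [add_sub_cancel] using
        one_add_mul_self_le_rpow_one_add_of_nonpos (x := x / m - 1)
          (by linarith [div_pos hx hm]) hs
    rw [Real.div_rpow hx.le hm.le, le_div_iff₀ (Real.rpow_pos_of_pos hm s)] at hbern
    linear_combination hbern
  calc m ^ s * ∫ ω, w ω ∂μ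
      = m ^ s * (1 - s) * ∫ ω, w ω ∂μ + m ^ s * s / m * ∫ ω, X ω * w ω ∂μ := by
        rw [hmean]; field_simp; ring
    _ = ∫ ω, (m ^ s * (1 - s) * w ω + m ^ s * s / m * (X ω * w ω)) ∂μ := by
        rw [integral_add (hwi.const_mul _) (hXw.const_mul _), integral_const_mul,
          integral_const_mul]
    _ ≤ ∫ ω, X ω ^ s * w ω ∂μ := by
        refine integral_mono_ae ((hwi.const_mul _).add (hXw.const_mul _)) hXsw ?_
        filter_upwards [hX, hw] with ω hXω hwω
        linear_combination mul_le_mul_of_nonneg_right (htangent _ hXω) hwω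

section Support

variable {ρ : Measure ℝ}

lemma integrable_continuous_mul_of_ae_mem_Ioc {a b : ℝ} {g v : ℝ → ℝ}
    (hρ : ∀ᵐ l ∂ρ, l ∈ Ioc a b) (hg : Continuous g) (hv : Integrable v ρ) :
    Integrable (fun l => g l * v l) ρ := by
  have hρ' : ρ.restrict (Icc a b) = ρ :=
    Measure.restrict_eq_self_of_ae_mem (hρ.mono fun _ hl => Ioc_subset_Icc_self hl)
  rw [← hρ'] at hv ⊢
  exact IntegrableOn.continuousOn_mul hg.continuousOn hv isCompact_Icc

lemma integral_id_mul_le {w : ℝ → ℝ} (hρ : ∀ᵐ l ∂ρ, l ∈ Ioc 0 1) (hw : ∀ᵐ l ∂ρ, 0 ≤ w l)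
    (hwi : Integrable w ρ) : ∫ l, l * w l ∂ρ ≤ ∫ l, w l ∂ρ := by
  refine integral_mono_of_nonneg ?_ hwi ?_
  · filter_upwards [hρ, hw] with l hl hwl using mul_nonneg hl.1.le hwl
  · filter_upwards [hρ, hw] with l hl hwl using mul_le_of_le_one_left hwl hl.2

end Support

/-- The exact line search learning rate `α = ∫ λ r² dρ / ∫ λ² r² dρ` of steepest descent at the
residual `r`; it is `0` when the denominator vanishes. -/
noncomputable def steepestDescentRate (ρ : Measure ℝ) (r : ℝ → ℝ) : ℝ :=
  (∫ l, l * r l ^ 2 ∂ρ) / ∫ l, l ^ 2 * r l ^ 2 ∂ρ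

section Rate

variable {ρ : Measure ℝ} {r : ℝ → ℝ}

lemma integral_sq_mul_sq_le (hρ : ∀ᵐ l ∂ρ, l ∈ Ioc 0 1)
    (hr : Integrable (fun l => r l ^ 2) ρ) :
    ∫ l, l ^ 2 * r l ^ 2 ∂ρ ≤ ∫ l, l * r l ^ 2 ∂ρ := by
  have hnonneg : ∀ᵐ l ∂ρ, 0 ≤ l * r l ^ 2 := hρ.mono fun l hl => mul_nonneg hl.1.le (sq_nonneg _)
  simpa only [pow_two, mul_assoc] using
    integral_id_mul_le hρ hnonneg (integrable_continuous_mul_of_ae_mem_Ioc hρ continuous_id hr)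

lemma one_le_steepestDescentRate (hρ : ∀ᵐ l ∂ρ, l ∈ Ioc 0 1)
    (hr : Integrable (fun l => r l ^ 2) ρ) (hpos : 0 < ∫ l, l ^ 2 * r l ^ 2 ∂ρ) :
    1 ≤ steepestDescentRate ρ r :=
  (one_le_div hpos).mpr (integral_sq_mul_sq_le hρ hr)

-- A Bochner integral that is nonzero is one of an integrable function, so a nonzero rate already
-- carries the integrability of its numerator and denominator.
lemma integrable_id_mul_sq_of_steepestDescentRate_ne_zero (hα : steepestDescentRate ρ r ≠ 0) :
    Integrable (fun l => l * r l ^ 2) ρ :=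
  .of_integral_ne_zero (div_ne_zero_iff.mp hα).1

lemma integrable_sq_mul_sq_of_steepestDescentRate_ne_zero (hα : steepestDescentRate ρ r ≠ 0) :
    Integrable (fun l => l ^ 2 * r l ^ 2) ρ :=
  .of_integral_ne_zero (div_ne_zero_iff.mp hα).2

lemma steepestDescentRate_mul_integral (hα : steepestDescentRate ρ r ≠ 0) :
    steepestDescentRate ρ r * ∫ l, l ^ 2 * r l ^ 2 ∂ρ = ∫ l, l * r l ^ 2 ∂ρ :=
  div_mul_cancel₀ _ (div_ne_zero_iff.mp hα).2

lemma integral_step_sq (hr : Integrable (fun l => r l ^ 2) ρ)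
    (hα : steepestDescentRate ρ r ≠ 0) :
    ∫ l, ((1 - steepestDescentRate ρ r * l) * r l) ^ 2 ∂ρ =
      (∫ l, r l ^ 2 ∂ρ) - steepestDescentRate ρ r * ∫ l, l * r l ^ 2 ∂ρ := by
  have h₁ := integrable_id_mul_sq_of_steepestDescentRate_ne_zero hα
  have h₂ := integrable_sq_mul_sq_of_steepestDescentRate_ne_zero hα
  have horth := steepestDescentRate_mul_integral hα
  set α := steepestDescentRate ρ r
  have h₀₁ : Integrable (fun l => r l ^ 2 - 2 * α * (l * r l ^ 2)) ρ := hr.sub (h₁.const_mul _)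
  calc ∫ l, ((1 - α * l) * r l) ^ 2 ∂ρ
      = ∫ l, (r l ^ 2 - 2 * α * (l * r l ^ 2) + α ^ 2 * (l ^ 2 * r l ^ 2)) ∂ρ := by
        congr 1 with l; ring
    _ = (∫ l, r l ^ 2 ∂ρ) - 2 * α * (∫ l, l * r l ^ 2 ∂ρ)
          + α ^ 2 * ∫ l, l ^ 2 * r l ^ 2 ∂ρ := by
        rw [integral_add h₀₁ (h₂.const_mul _),
          integral_sub hr (h₁.const_mul _), integral_const_mul, integral_const_mul]
    _ = (∫ l, r l ^ 2 ∂ρ) - α * ∫ l, l * r l ^ 2 ∂ρ := by linear_combination α * horth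

lemma integral_step_sq_le (hρ : ∀ᵐ l ∂ρ, l ∈ Ioc 0 1) (hr : Integrable (fun l => r l ^ 2) ρ)
    (hpos : 0 < ∫ l, l ^ 2 * r l ^ 2 ∂ρ) :
    ∫ l, ((1 - steepestDescentRate ρ r * l) * r l) ^ 2 ∂ρ ≤
      (∫ l, r l ^ 2 ∂ρ) - ∫ l, l * r l ^ 2 ∂ρ := by
  have hα := one_le_steepestDescentRate hρ hr hpos
  rw [integral_step_sq hr (by positivity)]
  exact sub_le_sub_left
    (le_mul_of_one_le_left (hpos.le.trans (integral_sq_mul_sq_le hρ hr)) hα) _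

lemma integral_antitoneOn_mul_step_sq_le {f : ℝ → ℝ} (hf : AntitoneOn f (Ioi 0))
    (hf₀ : ∀ l ∈ Ioi 0, 0 ≤ f l) (hρ : ∀ᵐ l ∂ρ, 0 < l)
    (hfr : Integrable (fun l => f l * r l ^ 2) ρ) (hα : 0 < steepestDescentRate ρ r) :
    ∫ l, f l * ((1 - steepestDescentRate ρ r * l) * r l) ^ 2 ∂ρ ≤ ∫ l, f l * r l ^ 2 ∂ρ := by
  have h₁ := integrable_id_mul_sq_of_steepestDescentRate_ne_zero hα.ne'
  have h₂ := integrable_sq_mul_sq_of_steepestDescentRate_ne_zero hα.ne'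
  have horth := steepestDescentRate_mul_integral hα.ne'
  set α := steepestDescentRate ρ r
  have hcorr : Integrable (fun l => α * (l ^ 2 * r l ^ 2) - l * r l ^ 2) ρ :=
    (h₂.const_mul α).sub h₁
  have hcorr_zero : ∫ l, (α * (l ^ 2 * r l ^ 2) - l * r l ^ 2) ∂ρ = 0 := by
    rw [integral_sub (h₂.const_mul α) h₁, integral_const_mul, horth, sub_self]
  -- `(1 - αl)² = 1 - αl + α² l (l - 1/α)`, and `f` is at most `f (1/α)` where the last term is
  -- positive and at least `f (1/α)` where it is negative.
  have hpointwise : ∀ l, 0 < l → f l * ((1 - α * l) * r l) ^ 2 ≤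
      f l * r l ^ 2 + α * f α⁻¹ * (α * (l ^ 2 * r l ^ 2) - l * r l ^ 2) := fun l hl => by
    have hassoc := mul_sub_le_mul_sub_of_antitoneOn hf (mem_Ioi.mpr hl)
      (mem_Ioi.mpr (inv_pos.mpr hα))
    have hscaled := mul_le_mul_of_nonneg_left hassoc
      (by positivity : 0 ≤ α ^ 2 * l * r l ^ 2)
    have hdropped : 0 ≤ f l * (α * l * r l ^ 2) := mul_nonneg (hf₀ l hl) (by positivity)
    have hinv : α * α⁻¹ = 1 := mul_inv_cancel₀ hα.ne'
    linear_combination hscaled + hdropped + (f l - f α⁻¹) * α * l * r l ^ 2 * hinv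
  calc ∫ l, f l * ((1 - α * l) * r l) ^ 2 ∂ρ
      ≤ ∫ l, (f l * r l ^ 2 + α * f α⁻¹ * (α * (l ^ 2 * r l ^ 2) - l * r l ^ 2)) ∂ρ := by
        refine integral_mono_of_nonneg ?_ (hfr.add (hcorr.const_mul _)) (hρ.mono hpointwise)
        exact hρ.mono fun l hl => mul_nonneg (hf₀ l hl) (sq_nonneg _)
    _ = ∫ l, f l * r l ^ 2 ∂ρ := by
        rw [integral_add hfr (hcorr.const_mul _), integral_const_mul, hcorr_zero, mul_zero,
          add_zero]

end Rate

/-- `q` is the sequence of residual polynomials, encoded as functions, of a run of steepest descent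
on the spectral measure `ρ`. Nondegeneracy keeps every learning rate away from the junk value of
division by zero. -/
structure IsSteepestDescent (ρ : Measure ℝ) (q : ℕ → ℝ → ℝ) : Prop where
  zero : ∀ l, q 0 l = 1
  succ : ∀ n l, q (n + 1) l = (1 - steepestDescentRate ρ (q n) * l) * q n l
  nondegenerate : ∀ n, 0 < ∫ l, l ^ 2 * q n l ^ 2 ∂ρ

namespace IsSteepestDescent

variable {ρ : Measure ℝ} {q : ℕ → ℝ → ℝ}

lemma continuous (hq : IsSteepestDescent ρ q) (n : ℕ) : Continuous (q n) := by
  induction n with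
  | zero => simpa only [funext hq.zero] using continuous_const
  | succ k ih => rw [funext (hq.succ k)]; fun_prop

lemma integrable_mul_sq {v : ℝ → ℝ} (hq : IsSteepestDescent ρ q) (hρ : ∀ᵐ l ∂ρ, l ∈ Ioc 0 1)
    (hv : Integrable v ρ) (n : ℕ) : Integrable (fun l => v l * q n l ^ 2) ρ := by
  simpa only [mul_comm, Pi.pow_apply] using
    integrable_continuous_mul_of_ae_mem_Ioc hρ ((hq.continuous n).pow 2) hv

lemma integrable_sq [IsFiniteMeasure ρ] (hq : IsSteepestDescent ρ q)
    (hρ : ∀ᵐ l ∂ρ, l ∈ Ioc 0 1) (n : ℕ) : Integrable (fun l => q n l ^ 2) ρ := by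
  simpa only [one_mul] using hq.integrable_mul_sq hρ (integrable_const 1) n

lemma integral_id_mul_sq_pos [IsFiniteMeasure ρ] (hq : IsSteepestDescent ρ q)
    (hρ : ∀ᵐ l ∂ρ, l ∈ Ioc 0 1) (n : ℕ) : 0 < ∫ l, l * q n l ^ 2 ∂ρ :=
  (hq.nondegenerate n).trans_le (integral_sq_mul_sq_le hρ (hq.integrable_sq hρ n))

lemma integral_sq_pos [IsFiniteMeasure ρ] (hq : IsSteepestDescent ρ q)
    (hρ : ∀ᵐ l ∂ρ, l ∈ Ioc 0 1) (n : ℕ) : 0 < ∫ l, q n l ^ 2 ∂ρ :=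
  (hq.integral_id_mul_sq_pos hρ n).trans_le
    (integral_id_mul_le hρ (ae_of_all _ fun _ => sq_nonneg _) (hq.integrable_sq hρ n))

lemma integral_antitoneOn_mul_sq_le [IsFiniteMeasure ρ] {f : ℝ → ℝ}
    (hq : IsSteepestDescent ρ q) (hρ : ∀ᵐ l ∂ρ, l ∈ Ioc 0 1) (hf : AntitoneOn f (Ioi 0))
    (hf₀ : ∀ l ∈ Ioi 0, 0 ≤ f l) (hfi : Integrable f ρ) (n : ℕ) :
    ∫ l, f l * q n l ^ 2 ∂ρ ≤ ∫ l, f l ∂ρ := by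
  induction n with
  | zero => simp only [hq.zero, one_pow, mul_one, le_refl]
  | succ k ih =>
    have hα : 0 < steepestDescentRate ρ (q k) := zero_lt_one.trans_le
      (one_le_steepestDescentRate hρ (hq.integrable_sq hρ k) (hq.nondegenerate k))
    simp only [hq.succ k]
    exact (integral_antitoneOn_mul_step_sq_le hf hf₀ (hρ.mono fun _ hl => hl.1)
      (hq.integrable_mul_sq hρ hfi k) hα).trans ih

lemma rpow_one_div_le_mean [IsFiniteMeasure ρ] {s : ℝ} (hq : IsSteepestDescent ρ q)
    (hρ : ∀ᵐ l ∂ρ, l ∈ Ioc 0 1) (hs : s < 0) (hint : Integrable (fun l => l ^ s) ρ) (n : ℕ) :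
    ((∫ l, l ^ s ∂ρ) / ∫ l, q n l ^ 2 ∂ρ) ^ (1 / s) ≤
      (∫ l, l * q n l ^ 2 ∂ρ) / ∫ l, q n l ^ 2 ∂ρ := by
  have hρ_pos : ∀ᵐ l ∂ρ, 0 < l := hρ.mono fun _ hl => hl.1
  have hW := hq.integral_sq_pos hρ n
  set m := (∫ l, l * q n l ^ 2 ∂ρ) / ∫ l, q n l ^ 2 ∂ρ
  have hm : 0 < m := div_pos (hq.integral_id_mul_sq_pos hρ n) hW
  have hjensen : m ^ s * ∫ l, q n l ^ 2 ∂ρ ≤ ∫ l, l ^ s * q n l ^ 2 ∂ρ :=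
    rpow_mul_integral_le_integral_rpow_mul hs.le hm hρ_pos (ae_of_all _ fun _ => sq_nonneg _)
      (hq.integrable_sq hρ n)
      (integrable_continuous_mul_of_ae_mem_Ioc hρ continuous_id (hq.integrable_sq hρ n))
      (hq.integrable_mul_sq hρ hint n) (div_mul_cancel₀ _ hW.ne').symm
  have hmoment : ∫ l, l ^ s * q n l ^ 2 ∂ρ ≤ ∫ l, l ^ s ∂ρ :=
    hq.integral_antitoneOn_mul_sq_le hρ (Real.antitoneOn_rpow_Ioi_of_exponent_nonpos hs.le)
      (fun l hl => Real.rpow_nonneg (le_of_lt hl) s) hint n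
  have hms : m ^ s ≤ (∫ l, l ^ s ∂ρ) / ∫ l, q n l ^ 2 ∂ρ :=
    (le_div_iff₀ hW).mpr (hjensen.trans hmoment)
  rw [one_div]
  exact (Real.rpow_inv_le_iff_of_neg ((Real.rpow_pos_of_pos hm s).trans_le hms) hm hs).mpr hms

lemma integral_succ_sq_le [IsFiniteMeasure ρ] {s : ℝ} (hq : IsSteepestDescent ρ q)
    (hρ : ∀ᵐ l ∂ρ, l ∈ Ioc 0 1) (hs : s < 0) (hint : Integrable (fun l => l ^ s) ρ) (n : ℕ) :
    ∫ l, q (n + 1) l ^ 2 ∂ρ ≤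
      (∫ l, q n l ^ 2 ∂ρ) * (1 - ((∫ l, l ^ s ∂ρ) / ∫ l, q n l ^ 2 ∂ρ) ^ (1 / s)) := by
  have hW := hq.integral_sq_pos hρ n
  have hmean := (le_div_iff₀' hW).mp (hq.rpow_one_div_le_mean hρ hs hint n)
  calc ∫ l, q (n + 1) l ^ 2 ∂ρ ≤ (∫ l, q n l ^ 2 ∂ρ) - ∫ l, l * q n l ^ 2 ∂ρ := by
        simp only [hq.succ n]
        exact integral_step_sq_le hρ (hq.integrable_sq hρ n) (hq.nondegenerate n)
    _ ≤ _ := by linarith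

end IsSteepestDescent

/-- Steepest Descent: if the spectral measure `ρ` (supported on `[0,1]`, no atom at 0)
satisfies `∫ λ^s dρ < ∞` for some `s < 0`, then the SD losses obey
`L_n ≤ (L_0^{1/s} + c_s n)^s` with `c_s = (1/|s|)((1/2)∫ λ^s dρ)^{1/s}`. -/
theorem steepest_descent_upper_bound
    (ρ : Measure ℝ) [IsFiniteMeasure ρ]
    (hsupp : ρ (Set.Icc (0:ℝ) 1)ᶜ = 0)
    (h0 : ρ {(0:ℝ)} = 0)
    (q : ℕ → ℝ → ℝ) (A : ℕ → ℝ)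
    (hq0 : ∀ l, q 0 l = 1)
    (hA : ∀ n, A n = (∫ l, l * (q n l) ^ 2 ∂ρ) / ∫ l, l ^ 2 * (q n l) ^ 2 ∂ρ)
    (hqrec : ∀ n l, q (n + 1) l = (1 - A n * l) * q n l)
    (hpos : ∀ n, 0 < ∫ l, l ^ 2 * (q n l) ^ 2 ∂ρ)
    (s : ℝ) (hs : s < 0)
    (hint : Integrable (fun l : ℝ => l ^ s) (ρ.restrict (Set.Icc (0:ℝ) 1))) :
    ∀ n : ℕ,
      (1/2) * ∫ l, (q n l) ^ 2 ∂ρ ≤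
        (((1/2) * ∫ l, (q 0 l) ^ 2 ∂ρ) ^ (1/s) +
            (1/|s|) * ((1/2) * ∫ l in Set.Icc (0:ℝ) 1, l ^ s ∂ρ) ^ (1/s) * n) ^ s := by
  have hIcc : ∀ᵐ l ∂ρ, l ∈ Icc (0 : ℝ) 1 := ae_iff.mpr hsupp
  have hne : ∀ᵐ l ∂ρ, l ≠ 0 := measure_eq_zero_iff_ae_notMem.mp h0
  have hρ : ∀ᵐ l ∂ρ, l ∈ Ioc (0 : ℝ) 1 := by
    filter_upwards [hIcc, hne] with l hl hl0 using ⟨hl.1.lt_of_ne' hl0, hl.2⟩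
  have hq : IsSteepestDescent ρ q := ⟨hq0, fun n l => by rw [hqrec, hA]; rfl, hpos⟩
  rw [Measure.restrict_eq_self_of_ae_mem hIcc] at hint ⊢
  have hJ : 0 ≤ ∫ l, l ^ s ∂ρ :=
    integral_nonneg_of_ae (hρ.mono fun l hl => Real.rpow_nonneg hl.1.le s)
  refine le_rpow_of_forall_succ_le_mul_one_sub hs (by positivity)
    (fun n => mul_pos one_half_pos (hq.integral_sq_pos hρ n)) fun n => ?_
  rw [mul_div_mul_left _ _ one_half_pos.ne', mul_assoc]
  exact mul_le_mul_of_nonneg_left (hq.integral_succ_sq_le hρ hs hint n) one_half_pos.le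
end

section
/- Let ζ>0, ν>0 and ε>0. For every sequence (q_n)_{n≥1} of real polynomials with deg q_n ≤ n and q_n(0) = 1, there exist a finite Borel measure ρ supported on (0,1] and a nonincreasing sequence (λ_k)_{k≥1} of positive reals such that: (i) ρ is supported on the set {λ_k : k ≥ 1}; (ii) lim_{k→∞} λ_k·k^ν = 1; (iii) lim_{λ→0+} ρ((0,λ])/λ^ζ = 1; and (iv) the set { n ≥ 1 : (1/2)∫ q_n(λ)² ρ(dλ) > n^{-2ζ-ε} } is infinite. -/
open MeasureTheory Filter Set Polynomial

/-!
Completing the square in the Cauchy quadratic form `∑ i j, c i * c j / (i + j + ζ)` one coefficient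
at a time bounds `∫ q² d(x ^ ζ)` over `(0, b)` below by a multiple of `b ^ ζ * n ^ (-2ζ)`, for every
polynomial `q` of degree at most `n` with `q 0 = 1`. So for each `b > 0`, the part of the measure
`d(x ^ ζ)` in `(0, b)` alone makes `q n` exceed the rate `n ^ (-2ζ - ε)` once `n` is large.

To discretize this measure, move the mass of each cell of the grid `k ^ (-ν)` to some node in the
closure of that cell. Neighbouring grid points have ratio tending to `1`, so both asymptotics hold
for any choice of nodes, and this freedom serves infinitely many `n` at once: cut the grid into
consecutive finite blocks, the `i`-th long enough that the integral of `(q n)²` over it already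
exceeds the rate for some `n = n i ≥ i`, and take as nodes in this block maximum points of
`(q (n i))²`, so that the loss at `n i` only increases.
-/

open scoped Asymptotics Function Topology

section Quantization

variable {α ι : Type*} [MeasurableSpace α] {μ : Measure α} {C : ι → Set α} {x : ι → α}

/-- The quantization of `μ` with cells `C i` and nodes `x i`: the mass of each cell is moved to
its node, which is not required to lie in the cell. -/
noncomputable def quantize (μ : Measure α) (C : ι → Set α) (x : ι → α) : Measure α :=
  Measure.sum fun i => μ (C i) • Measure.dirac (x i)

theorem quantize_apply [Countable ι] (hC : ∀ i, MeasurableSet (C i)) (hd : Pairwise (Disjoint on C))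
    {s : Set α} (hs : MeasurableSet s) :
    quantize μ C x s = μ (⋃ i ∈ x ⁻¹' s, C i) := by
  rw [quantize, Measure.sum_apply _ hs, measure_biUnion (to_countable _) (hd.set_pairwise _)
    fun i _ => hC i, tsum_subtype (x ⁻¹' s) fun i => μ (C i)]
  refine tsum_congr fun i => ?_
  by_cases hi : x i ∈ s <;> simp [Measure.dirac_apply' _ hs, hi]

theorem quantize_compl_eq_zero {s : Set α} (hs : MeasurableSet s) (hx : ∀ i, x i ∈ s) :
    quantize μ C x sᶜ = 0 := by
  simp [quantize, Measure.sum_apply _ hs.compl, Measure.dirac_apply' _ hs.compl, hx]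

theorem isFiniteMeasure_quantize [Countable ι] (hC : ∀ i, MeasurableSet (C i))
    (hd : Pairwise (Disjoint on C)) (hμ : μ (⋃ i, C i) ≠ ⊤) : IsFiniteMeasure (quantize μ C x) :=
  ⟨by simpa [quantize_apply hC hd] using hμ.lt_top⟩

theorem sum_measureReal_mul_le_integral_quantize [MeasurableSingletonClass α] {f : α → ℝ}
    (hf : Integrable f (quantize μ C x)) (hf0 : 0 ≤ f) (t : Finset ι) :
    ∑ i ∈ t, μ.real (C i) * f (x i) ≤ ∫ y, f y ∂quantize μ C x := by
  have hsum := hasSum_integral_measure hf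
  simp only [integral_smul_measure, integral_dirac, smul_eq_mul] at hsum
  exact sum_le_hasSum t (fun i _ => mul_nonneg ENNReal.toReal_nonneg (hf0 _)) hsum

theorem integrable_quantize [TopologicalSpace α] [OpensMeasurableSpace α]
    [IsFiniteMeasure (quantize μ C x)] {f : α → ℝ} {s : Set α} (hf : ContinuousOn f s)
    (hs : IsCompact s) (hsm : MeasurableSet s) (hx : ∀ i, x i ∈ s) :
    Integrable f (quantize μ C x) := by
  have hint : IntegrableOn f s (quantize μ C x) :=
    hf.integrableOn_of_subset_isCompact hs hsm Subset.rfl (measure_ne_top _ _)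
  have hae : ∀ᵐ y ∂quantize μ C x, y ∈ s := quantize_compl_eq_zero hsm hx
  rwa [IntegrableOn, Measure.restrict_eq_self_of_ae_mem hae] at hint

end Quantization

section Grid

/-- The `k`-th cell `[a (k + 1), a k)` of the partition defined by a decreasing grid `a`. -/
abbrev gridCell {α : Type*} [Preorder α] (a : ℕ → α) (k : ℕ) : Set α :=
  Ico (a (k + 1)) (a k)

theorem pairwise_disjoint_gridCell {α : Type*} [Preorder α] {a : ℕ → α} (ha : Antitone a) :
    Pairwise (Disjoint on gridCell a) :=
  ha.pairwise_disjoint_on_Ico_succ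

theorem mem_Ioc_of_forall_mem_Icc {α : Type*} [Preorder α] {a x : ℕ → α} {c : α} (ha : Antitone a)
    (hlt : ∀ k, c < a k) (hx : ∀ k, x k ∈ Icc (a (k + 1)) (a k)) (k : ℕ) : x k ∈ Ioc c (a 0) :=
  ⟨(hlt _).trans_le (hx k).1, (hx k).2.trans (ha k.zero_le)⟩

variable {α β : Type*} [LinearOrder α] [TopologicalSpace α] [OrderTopology α]
  [LinearOrder β] [TopologicalSpace β] [OrderTopology β] {a : ℕ → α} {c : α}

theorem iUnion_gridCell_add (ha : Antitone a) (hlt : ∀ k, c < a k) (hc : Tendsto a atTop (𝓝 c))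
    (K : ℕ) : ⋃ k, gridCell a (K + k) = Ioo c (a K) := by
  classical
  refine Subset.antisymm (iUnion_subset fun k x hx =>
    ⟨(hlt _).trans_le hx.1, hx.2.trans_le (ha (K.le_add_right k))⟩) fun x hx => mem_iUnion.2 ?_
  have hex : ∃ k, a (K + k) ≤ x :=
    ((hc.comp (tendsto_atTop_mono (Nat.le_add_left · K) tendsto_id)).eventually_le_const
      hx.1).exists
  obtain ⟨k, hk⟩ : ∃ k, Nat.find hex = k + 1 :=
    Nat.exists_eq_succ_of_ne_zero fun h => hx.2.not_ge (by simpa [h] using Nat.find_spec hex)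
  exact ⟨k, by simpa [hk] using! Nat.find_spec hex, not_le.1 (Nat.find_min hex (by lia))⟩

theorem iUnion_gridCell (ha : Antitone a) (hlt : ∀ k, c < a k) (hc : Tendsto a atTop (𝓝 c)) :
    ⋃ k, gridCell a k = Ioo c (a 0) := by
  simpa using iUnion_gridCell_add ha hlt hc 0

theorem eventually_nhdsGT_of_eventually_forall_mem_gridCell (ha : Antitone a)
    (hlt : ∀ k, c < a k) (hc : Tendsto a atTop (𝓝 c)) {p : α → Prop}
    (hp : ∀ᶠ k in atTop, ∀ l ∈ gridCell a k, p l) : ∀ᶠ l in 𝓝[>] c, p l := by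
  obtain ⟨K, hK⟩ := eventually_atTop.1 hp
  filter_upwards [Ioo_mem_nhdsGT (hlt K)] with l hl
  rw [← iUnion_gridCell_add ha hlt hc] at hl
  obtain ⟨k, hk⟩ := mem_iUnion.1 hl
  exact hK (K + k) (K.le_add_right k) l hk

theorem tendsto_nhdsGT_of_forall_mem_gridCell (ha : Antitone a) (hlt : ∀ k, c < a k)
    (hc : Tendsto a atTop (𝓝 c)) {F : α → β} {u v : ℕ → β} {L : β}
    (hu : Tendsto u atTop (𝓝 L)) (hv : Tendsto v atTop (𝓝 L))
    (hF : ∀ k, ∀ l ∈ gridCell a k, F l ∈ Icc (u k) (v k)) : Tendsto F (𝓝[>] c) (𝓝 L) := by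
  refine tendsto_order.2 ⟨fun b hb => ?_, fun b hb => ?_⟩ <;>
    refine eventually_nhdsGT_of_eventually_forall_mem_gridCell ha hlt hc ?_
  · filter_upwards [hu.eventually_const_lt hb] with k hk l hl using hk.trans_le (hF k l hl).1
  · filter_upwards [hv.eventually_lt_const hb] with k hk l hl using (hF k l hl).2.trans_lt hk

end Grid

theorem exists_blockIndex_of_strictMono {K : ℕ → ℕ} (hK : StrictMono K) :
    ∃ block : ℕ → ℕ, ∀ i, ∀ k ∈ Finset.Ico (K i) (K (i + 1)), block k = i := by
  refine ⟨fun k => Nat.findGreatest (K · ≤ k) k, fun i k hk => ?_⟩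
  rw [Finset.mem_Ico] at hk
  exact Nat.findGreatest_eq_iff.2 ⟨hK.le_apply.trans hk.1, fun _ => hk.1,
    fun _ hj _ => (hk.2.trans_le (hK.monotone hj)).not_ge⟩

theorem exists_blockwise_constant_frequently {P : ℕ → ℕ → ℕ → Prop}
    (h : ∀ K, ∃ᶠ n in atTop, ∃ K' > K, P n K K') :
    ∃ g : ℕ → ℕ, ∃ᶠ n in atTop, ∃ K K', P n K K' ∧ ∀ k ∈ Finset.Ico K K', g k = n := by
  simp only [frequently_atTop] at h ⊢
  choose n hn K' hK' hP using h
  let K : ℕ → ℕ := fun i => Nat.rec 0 (fun i k => K' k i) i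
  obtain ⟨block, hblock⟩ := exists_blockIndex_of_strictMono (K := K)
    (strictMono_nat_of_lt_succ fun i => hK' (K i) i)
  exact ⟨fun k => n (K (block k)) (block k), fun N => ⟨n (K N) N, hn _ _, K N, K (N + 1), hP _ _,
    fun k hk => by simp only [hblock N k hk]⟩⟩

theorem exists_mem_Icc_setIntegral_Ico_le {μ : Measure ℝ} {f : ℝ → ℝ} {c d : ℝ} (hcd : c ≤ d)
    (hf : ContinuousOn f (Icc c d)) (hμ : μ (Ico c d) ≠ ⊤) :
    ∃ x ∈ Icc c d, ∫ y in Ico c d, f y ∂μ ≤ μ.real (Ico c d) * f x := by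
  obtain ⟨x, hx, hmax⟩ := isCompact_Icc.exists_isMaxOn (nonempty_Icc.2 hcd) hf
  refine ⟨x, hx, ?_⟩
  rw [← smul_eq_mul, ← setIntegral_const]
  exact setIntegral_mono_on (hf.integrableOn_of_subset_isCompact isCompact_Icc measurableSet_Ico
    Ico_subset_Icc_self hμ) (integrableOn_const hμ) measurableSet_Ico
    fun y hy => hmax (Ico_subset_Icc_self hy)

section GridQuantization

variable {μ : Measure ℝ} {a lam : ℕ → ℝ} {c : ℝ}

theorem exists_lt_sum_setIntegral_gridCell (ha : Antitone a) (hlt : ∀ k, c < a k)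
    (hc : Tendsto a atTop (𝓝 c)) {f : ℝ → ℝ} {K : ℕ} (hf : IntegrableOn f (Ioo c (a K)) μ) {r : ℝ}
    (hr : r < ∫ x in Ioo c (a K), f x ∂μ) :
    ∃ K' > K, r < ∑ k ∈ Finset.Ico K K', ∫ x in gridCell a k, f x ∂μ := by
  rw [← iUnion_gridCell_add ha hlt hc] at hf hr
  have hsum := hasSum_integral_iUnion (fun _ => measurableSet_Ico)
    ((pairwise_disjoint_gridCell ha).comp_of_injective (add_right_injective K)) hf
  obtain ⟨m, hm, hm0⟩ := ((hsum.tendsto_sum_nat.eventually_const_lt hr).and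
    (eventually_gt_atTop 0)).exists
  exact ⟨K + m, by lia, by simpa [Finset.sum_Ico_eq_sum_range] using! hm⟩

theorem isFiniteMeasure_quantize_gridCell (ha : Antitone a) (hlt : ∀ k, c < a k)
    (hc : Tendsto a atTop (𝓝 c)) (hμ : μ (Ioo c (a 0)) ≠ ⊤) :
    IsFiniteMeasure (quantize μ (gridCell a) lam) :=
  isFiniteMeasure_quantize (fun _ => measurableSet_Ico) (pairwise_disjoint_gridCell ha)
    (by rwa [iUnion_gridCell ha hlt hc])

theorem measure_Ioo_le_quantize_Ioc (ha : Antitone a) (hlt : ∀ k, c < a k)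
    (hc : Tendsto a atTop (𝓝 c)) (hlam : ∀ k, lam k ∈ Icc (a (k + 1)) (a k)) {N : ℕ} {l : ℝ}
    (hl : a N ≤ l) : μ (Ioo c (a N)) ≤ quantize μ (gridCell a) lam (Ioc c l) := by
  rw [quantize_apply (fun _ => measurableSet_Ico) (pairwise_disjoint_gridCell ha)
    measurableSet_Ioc, ← iUnion_gridCell_add ha hlt hc]
  refine measure_mono (iUnion_subset fun k => subset_biUnion_of_mem (u := gridCell a) ?_)
  exact ⟨(hlt _).trans_le (hlam _).1, (hlam _).2.trans ((ha (N.le_add_right k)).trans hl)⟩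

theorem quantize_Ioc_le_measure_Ioo (ha : Antitone a) (hlt : ∀ k, c < a k)
    (hlam : ∀ k, lam k ∈ Icc (a (k + 1)) (a k)) {N : ℕ} {l : ℝ} (hl : l < a N) :
    quantize μ (gridCell a) lam (Ioc c l) ≤ μ (Ioo c (a N)) := by
  rw [quantize_apply (fun _ => measurableSet_Ico) (pairwise_disjoint_gridCell ha)
    measurableSet_Ioc]
  refine measure_mono (iUnion₂_subset fun k hk x hx => ⟨(hlt _).trans_le hx.1, hx.2.trans_le ?_⟩)
  have hNk : N < k + 1 := ha.reflect_lt (((hlam k).1.trans hk.2).trans_lt hl)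
  exact ha (Nat.lt_succ_iff.1 hNk)

theorem exists_nodes_frequently_lt_integral_quantize (ha : Antitone a) (hlt : ∀ k, c < a k)
    (hc : Tendsto a atTop (𝓝 c)) (hμ : μ (Ioo c (a 0)) ≠ ⊤) {f : ℕ → ℝ → ℝ}
    (hf : ∀ n, Continuous (f n)) (hf0 : ∀ n, 0 ≤ f n) {r : ℕ → ℝ}
    (hr : ∀ b > c, ∃ᶠ n in atTop, r n < ∫ x in Ioo c b, f n x ∂μ) :
    ∃ lam : ℕ → ℝ, (∀ k, lam k ∈ Icc (a (k + 1)) (a k)) ∧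
      ∃ᶠ n in atTop, r n < ∫ x, f n x ∂quantize μ (gridCell a) lam := by
  have hint (n K : ℕ) : IntegrableOn (f n) (Ioo c (a K)) μ :=
    (hf n).continuousOn.integrableOn_of_subset_isCompact isCompact_Icc measurableSet_Ioo
      Ioo_subset_Icc_self (measure_ne_top_of_subset (Ioo_subset_Ioo_right (ha K.zero_le)) hμ)
  obtain ⟨g, hg⟩ := exists_blockwise_constant_frequently fun K => (hr (a K) (hlt K)).mono
    fun n hn => exists_lt_sum_setIntegral_gridCell ha hlt hc (hint n K) hn
  have hcell (k : ℕ) : μ (gridCell a k) ≠ ⊤ := measure_ne_top_of_subset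
    ((subset_iUnion (gridCell a) k).trans_eq (iUnion_gridCell ha hlt hc)) hμ
  choose lam hlam hmax using fun k => exists_mem_Icc_setIntegral_Ico_le (ha k.le_succ)
    (hf (g k)).continuousOn (hcell k)
  have hfin : IsFiniteMeasure (quantize μ (gridCell a) lam) :=
    isFiniteMeasure_quantize_gridCell ha hlt hc hμ
  refine ⟨lam, hlam, hg.mono ?_⟩
  rintro n ⟨K, K', hlt_sum, hgn⟩
  calc r n < ∑ k ∈ Finset.Ico K K', ∫ x in gridCell a k, f n x ∂μ := hlt_sum
    _ ≤ ∑ k ∈ Finset.Ico K K', μ.real (gridCell a k) * f n (lam k) :=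
        Finset.sum_le_sum fun k hk => hgn k hk ▸ hmax k
    _ ≤ ∫ x, f n x ∂quantize μ (gridCell a) lam :=
        sum_measureReal_mul_le_integral_quantize (integrable_quantize (hf n).continuousOn
          isCompact_Icc measurableSet_Icc fun k =>
            Ioc_subset_Icc_self (mem_Ioc_of_forall_mem_Icc ha hlt hlam k)) (hf0 n) _

end GridQuantization

section CauchyForm

variable {𝕜 : Type*} [Field 𝕜] [LinearOrder 𝕜] [IsStrictOrderedRing 𝕜]

-- Schur complement of the Cauchy matrix `1 / (t i + t j)` with respect to the diagonal entry
-- `1 / (2 * m)`: the coefficient of a node `t i = m` vanishes on the right.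
theorem sum_mul_div_add_eq_sum_add_sq {ι : Type*} {t : ι → 𝕜} (ht : ∀ i, 0 < t i) {m : 𝕜}
    (hm : 0 < m) (s : Finset ι) (c : ι → 𝕜) :
    ∑ i ∈ s, ∑ j ∈ s, c i * c j / (t i + t j) =
      ∑ i ∈ s, ∑ j ∈ s,
        (c i * ((t i - m) / (t i + m))) * (c j * ((t j - m) / (t j + m))) / (t i + t j) +
      2 * m * (∑ i ∈ s, c i / (t i + m)) ^ 2 := by
  rw [pow_two, Finset.sum_mul_sum, Finset.mul_sum, ← Finset.sum_add_distrib]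
  refine Finset.sum_congr rfl fun i _ => ?_
  rw [Finset.mul_sum, ← Finset.sum_add_distrib]
  refine Finset.sum_congr rfl fun j _ => ?_
  have hi : t i + m ≠ 0 := (add_pos (ht i) hm).ne'
  have hj : t j + m ≠ 0 := (add_pos (ht j) hm).ne'
  have hij : t i + t j ≠ 0 := (add_pos (ht i) (ht j)).ne'
  field_simp
  ring

theorem sq_div_mul_prod_le_sum_mul_div_add {t : ℕ → 𝕜} (ht : ∀ i, 0 < t i) (n : ℕ) (c : ℕ → 𝕜) :
    c 0 ^ 2 / (2 * t 0) *
        ∏ j ∈ Finset.range n, ((t (j + 1) - t 0) / (t (j + 1) + t 0)) ^ 2 ≤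
      ∑ i ∈ Finset.range (n + 1), ∑ j ∈ Finset.range (n + 1), c i * c j / (t i + t j) := by
  induction n generalizing c with
  | zero => simp [pow_two, two_mul]
  | succ n ih =>
    set m := t (n + 1)
    have hm : 0 < m := ht (n + 1)
    let d : ℕ → 𝕜 := fun i => c i * ((t i - m) / (t i + m))
    have hd_last : d (n + 1) = 0 := by simp [d, m]
    calc c 0 ^ 2 / (2 * t 0) *
          ∏ j ∈ Finset.range (n + 1), ((t (j + 1) - t 0) / (t (j + 1) + t 0)) ^ 2
        = d 0 ^ 2 / (2 * t 0) *
            ∏ j ∈ Finset.range n, ((t (j + 1) - t 0) / (t (j + 1) + t 0)) ^ 2 := by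
          rw [Finset.prod_range_succ]; ring
      _ ≤ ∑ i ∈ Finset.range (n + 1), ∑ j ∈ Finset.range (n + 1), d i * d j / (t i + t j) := ih d
      _ = ∑ i ∈ Finset.range (n + 1 + 1), ∑ j ∈ Finset.range (n + 1 + 1),
            d i * d j / (t i + t j) := by
          simp [Finset.sum_range_succ _ (n + 1), hd_last]
      _ ≤ _ := by
          rw [sum_mul_div_add_eq_sum_add_sq ht hm _ c]
          exact le_add_of_nonneg_right (by positivity)

end CauchyForm

theorem exp_neg_mul_rpow_neg_le_prod {ζ : ℝ} (hζ : 0 ≤ ζ) {n : ℕ} (hn : n ≠ 0) :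
    Real.exp (-ζ) * (n : ℝ) ^ (-ζ) ≤ ∏ j ∈ Finset.range n, ((j : ℝ) + 1) / (j + 1 + ζ) := by
  have hharmonic : ∑ j ∈ Finset.range n, ((j : ℝ) + 1)⁻¹ ≤ 1 + Real.log n := by
    simpa [harmonic] using harmonic_le_one_add_log n
  have hfactor (j : ℕ) : Real.exp (-ζ * ((j : ℝ) + 1)⁻¹) ≤ ((j : ℝ) + 1) / (j + 1 + ζ) := by
    rw [neg_mul, Real.exp_neg, ← inv_div]
    refine inv_anti₀ (by positivity) (le_of_eq_of_le ?_ (Real.add_one_le_exp _))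
    field_simp
    ring
  calc Real.exp (-ζ) * (n : ℝ) ^ (-ζ)
      = Real.exp (-ζ * (1 + Real.log n)) := by
        rw [Real.rpow_def_of_pos (by positivity), ← Real.exp_add]; ring_nf
    _ ≤ Real.exp (-ζ * ∑ j ∈ Finset.range n, ((j : ℝ) + 1)⁻¹) :=
        Real.exp_le_exp.2 (mul_le_mul_of_nonpos_left hharmonic (neg_nonpos.2 hζ))
    _ = ∏ j ∈ Finset.range n, Real.exp (-ζ * ((j : ℝ) + 1)⁻¹) := by
        rw [Finset.mul_sum, Real.exp_sum]
    _ ≤ ∏ j ∈ Finset.range n, ((j : ℝ) + 1) / (j + 1 + ζ) :=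
        Finset.prod_le_prod (fun _ _ => (Real.exp_pos _).le) fun j _ => hfactor j

section PowerMeasure

/-- The measure on the positive half-line with distribution function `x ↦ x ^ ζ`, given by its
density `ζ x ^ (ζ - 1)`. -/
noncomputable def powerMeasure (ζ : ℝ) : Measure ℝ :=
  (volume.restrict (Ioi 0)).withDensity fun x => ENNReal.ofReal (ζ * x ^ (ζ - 1))

variable {ζ : ℝ} {b : ℝ}

theorem setIntegral_Ioo_powerMeasure (hζ : 0 ≤ ζ) (hb : 0 ≤ b) (f : ℝ → ℝ) :
    ∫ x in Ioo 0 b, f x ∂powerMeasure ζ = ∫ x in 0..b, ζ * x ^ (ζ - 1) * f x := by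
  rw [powerMeasure, setIntegral_withDensity_eq_setIntegral_toReal_smul (by fun_prop)
    (ae_of_all _ fun _ => ENNReal.ofReal_lt_top) _ measurableSet_Ioo,
    Measure.restrict_restrict_of_subset Ioo_subset_Ioi_self, intervalIntegral.integral_of_le hb,
    integral_Ioc_eq_integral_Ioo]
  refine setIntegral_congr_fun measurableSet_Ioo fun x hx => ?_
  have := hx.1
  simp only [smul_eq_mul]
  rw [ENNReal.toReal_ofReal (by positivity)]

theorem powerMeasure_Ioo (hζ : 0 < ζ) (hb : 0 ≤ b) :
    powerMeasure ζ (Ioo 0 b) = ENNReal.ofReal (b ^ ζ) := by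
  have hint : IntegrableOn (fun x : ℝ => ζ * x ^ (ζ - 1)) (Ioo 0 b) :=
    ((intervalIntegrable_iff_integrableOn_Ioo_of_le hb).1
      (intervalIntegral.intervalIntegrable_rpow' (by linarith))).const_mul ζ
  rw [powerMeasure, withDensity_apply _ measurableSet_Ioo,
    Measure.restrict_restrict_of_subset Ioo_subset_Ioi_self,
    ← ofReal_integral_eq_lintegral_ofReal hint (ae_restrict_of_forall_mem measurableSet_Ioo
      fun x hx => by have := hx.1; positivity),
    ← integral_Ioc_eq_integral_Ioo, ← intervalIntegral.integral_of_le hb,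
    intervalIntegral.integral_const_mul, integral_rpow (Or.inl (by linarith)), sub_add_cancel,
    Real.zero_rpow hζ.ne', sub_zero, mul_div_cancel₀ _ hζ.ne']

theorem measureReal_powerMeasure_Ioo (hζ : 0 < ζ) (hb : 0 ≤ b) :
    (powerMeasure ζ).real (Ioo 0 b) = b ^ ζ := by
  rw [measureReal_def, powerMeasure_Ioo hζ hb, ENNReal.toReal_ofReal (Real.rpow_nonneg hb ζ)]

theorem powerMeasure_Ioo_ne_top (hζ : 0 < ζ) (hb : 0 ≤ b) : powerMeasure ζ (Ioo 0 b) ≠ ⊤ :=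
  powerMeasure_Ioo hζ hb ▸ ENNReal.ofReal_ne_top

theorem setIntegral_Ioo_pow_powerMeasure (hζ : 0 < ζ) (hb : 0 < b) (m : ℕ) :
    ∫ x in Ioo 0 b, x ^ m ∂powerMeasure ζ = ζ * b ^ ζ * (b ^ m / (m + ζ)) := by
  have hrpow : EqOn (fun x : ℝ => ζ * x ^ (ζ - 1) * x ^ m) (fun x => ζ * x ^ (m + ζ - 1))
      (Ioo 0 b) := fun x hx => by
    simp only [add_sub_assoc, Real.rpow_add hx.1 m, Real.rpow_natCast]
    ring
  have hm : 0 < m + ζ := by positivity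
  rw [setIntegral_Ioo_powerMeasure hζ.le hb.le,
    intervalIntegral.integral_congr_Ioo_of_le hb.le hrpow,
    intervalIntegral.integral_const_mul, integral_rpow (Or.inl (by linarith)), sub_add_cancel,
    Real.zero_rpow hm.ne', sub_zero, Real.rpow_add hb, Real.rpow_natCast]
  ring

theorem setIntegral_Ioo_sq_eval_powerMeasure (hζ : 0 < ζ) (hb : 0 < b) {p : ℝ[X]} {n : ℕ}
    (hp : p.natDegree ≤ n) :
    ∫ x in Ioo 0 b, p.eval x ^ 2 ∂powerMeasure ζ =
      ζ * b ^ ζ * ∑ i ∈ Finset.range (n + 1), ∑ j ∈ Finset.range (n + 1),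
        (p.coeff i * b ^ i) * (p.coeff j * b ^ j) / ((i : ℝ) + j + ζ) := by
  have hint (i j : ℕ) : IntegrableOn (fun x : ℝ => p.coeff i * p.coeff j * x ^ (i + j)) (Ioo 0 b)
      (powerMeasure ζ) :=
    ContinuousOn.integrableOn_of_subset_isCompact (by fun_prop) isCompact_Icc measurableSet_Ioo
      Ioo_subset_Icc_self (powerMeasure_Ioo_ne_top hζ hb.le)
  have hexpand (x : ℝ) : p.eval x ^ 2 = ∑ i ∈ Finset.range (n + 1), ∑ j ∈ Finset.range (n + 1),
      p.coeff i * p.coeff j * x ^ (i + j) := by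
    rw [eval_eq_sum_range' (Nat.lt_succ_of_le hp), pow_two, Finset.sum_mul_sum]
    simp only [pow_add, mul_mul_mul_comm]
  simp only [hexpand]
  rw [integral_finsetSum _ fun i _ => integrable_finsetSum _ fun j _ => hint i j, Finset.mul_sum]
  refine Finset.sum_congr rfl fun i _ => ?_
  rw [integral_finsetSum _ fun j _ => hint i j, Finset.mul_sum]
  refine Finset.sum_congr rfl fun j _ => ?_
  rw [integral_const_mul, setIntegral_Ioo_pow_powerMeasure hζ hb]
  push_cast
  ring

theorem le_setIntegral_Ioo_sq_eval_powerMeasure (hζ : 0 < ζ) (hb : 0 < b) {p : ℝ[X]} {n : ℕ}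
    (hn : n ≠ 0) (hp : p.natDegree ≤ n) (hp0 : p.eval 0 = 1) :
    b ^ ζ * Real.exp (-(2 * ζ)) * (n : ℝ) ^ (-(2 * ζ)) ≤
      ∫ x in Ioo 0 b, p.eval x ^ 2 ∂powerMeasure ζ := by
  have hcoeff : p.coeff 0 = 1 := by rw [coeff_zero_eq_eval_zero, hp0]
  let t : ℕ → ℝ := fun i => i + ζ / 2
  have hadd (i j : ℕ) : t i + t j = i + j + ζ := by ring
  have hratio (j : ℕ) : (t (j + 1) - t 0) / (t (j + 1) + t 0) = ((j : ℝ) + 1) / (j + 1 + ζ) := by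
    simp only [t, Nat.cast_add, Nat.cast_one, Nat.cast_zero]
    ring
  have hcauchy := sq_div_mul_prod_le_sum_mul_div_add (t := t) (fun i => by positivity) n
    fun i => p.coeff i * b ^ i
  simp only [hratio] at hcauchy
  simp only [hadd, hcoeff, pow_zero, mul_one, one_pow, Finset.prod_pow] at hcauchy
  rw [setIntegral_Ioo_sq_eval_powerMeasure hζ hb hp]
  calc b ^ ζ * Real.exp (-(2 * ζ)) * (n : ℝ) ^ (-(2 * ζ))
      = b ^ ζ * (Real.exp (-ζ) * (n : ℝ) ^ (-ζ)) ^ 2 := by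
        rw [mul_pow, ← Real.rpow_mul_natCast n.cast_nonneg, ← Real.exp_nat_mul]
        push_cast
        ring_nf
    _ ≤ b ^ ζ * (∏ j ∈ Finset.range n, ((j : ℝ) + 1) / (j + 1 + ζ)) ^ 2 := by
        gcongr
        exact exp_neg_mul_rpow_neg_le_prod hζ.le hn
    _ = ζ * b ^ ζ *
          (1 / (2 * t 0) * (∏ j ∈ Finset.range n, ((j : ℝ) + 1) / (j + 1 + ζ)) ^ 2) := by
        simp only [t, Nat.cast_zero, zero_add, mul_div_cancel₀ ζ two_ne_zero]
        field_simp
    _ ≤ _ := by gcongr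

end PowerMeasure

theorem tendsto_div_of_forall_mem_Icc {a lam : ℕ → ℝ} (ha : ∀ k, 0 < a k)
    (hratio : Tendsto (fun k => a (k + 1) / a k) atTop (𝓝 1))
    (hlam : ∀ k, lam k ∈ Icc (a (k + 1)) (a k)) :
    Tendsto (fun k => lam k / a k) atTop (𝓝 1) :=
  tendsto_of_tendsto_of_tendsto_of_le_of_le hratio tendsto_const_nhds
    (fun k => div_le_div_of_nonneg_right (hlam k).1 (ha k).le)
    fun k => (div_le_one (ha k)).2 (hlam k).2

theorem tendsto_quantize_powerMeasure_Ioc_div_rpow {ζ : ℝ} (hζ : 0 < ζ) {a lam : ℕ → ℝ}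
    (ha : Antitone a) (hpos : ∀ k, 0 < a k) (hlim : Tendsto a atTop (𝓝 0))
    (hratio : Tendsto (fun k => a (k + 1) / a k) atTop (𝓝 1))
    (hlam : ∀ k, lam k ∈ Icc (a (k + 1)) (a k)) :
    Tendsto (fun l => (quantize (powerMeasure ζ) (gridCell a) lam).real (Ioc 0 l) / l ^ ζ)
      (𝓝[>] 0) (𝓝 1) := by
  have hlower : Tendsto (fun k => (a (k + 1) / a k) ^ ζ) atTop (𝓝 1) := by
    simpa using hratio.rpow_const (p := ζ) (Or.inl one_ne_zero)
  have hupper : Tendsto (fun k => (a k / a (k + 1)) ^ ζ) atTop (𝓝 1) := by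
    simpa using (hratio.inv₀ one_ne_zero).rpow_const (p := ζ) (Or.inl (by simp))
  have hmass (k : ℕ) : (powerMeasure ζ).real (Ioo 0 (a k)) = a k ^ ζ :=
    measureReal_powerMeasure_Ioo hζ (hpos k).le
  have hne_top (k : ℕ) : powerMeasure ζ (Ioo 0 (a k)) ≠ ⊤ :=
    powerMeasure_Ioo_ne_top hζ (hpos k).le
  have : IsFiniteMeasure (quantize (powerMeasure ζ) (gridCell a) lam) :=
    isFiniteMeasure_quantize_gridCell ha hpos hlim (hne_top 0)
  refine tendsto_nhdsGT_of_forall_mem_gridCell ha hpos hlim hlower hupper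
    fun k l ⟨hl₁, hl₂⟩ => ?_
  have hk := hpos k
  have hk' := hpos (k + 1)
  have hl : 0 < l := hk'.trans_le hl₁
  rw [Real.div_rpow hk'.le hk.le, Real.div_rpow hk.le hk'.le, ← hmass k, ← hmass (k + 1)]
  constructor
  · gcongr ?_ / ?_
    · exact ENNReal.toReal_mono (measure_ne_top _ _)
        (measure_Ioo_le_quantize_Ioc ha hpos hlim hlam hl₁)
    · rw [hmass]
      gcongr
  · gcongr ?_ / ?_
    · rw [hmass]
      positivity
    · exact ENNReal.toReal_mono (hne_top k) (quantize_Ioc_le_measure_Ioo ha hpos hlam hl₂)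
    · rw [hmass]
      gcongr

theorem eventually_lt_setIntegral_Ioo_sq_eval {ζ b : ℝ} (hζ : 0 < ζ) (hb : 0 < b) {r : ℕ → ℝ}
    (hr : r =o[atTop] fun n : ℕ => (n : ℝ) ^ (-(2 * ζ))) :
    ∀ᶠ n in atTop, ∀ p : ℝ[X], p.natDegree ≤ n → p.eval 0 = 1 →
      r n < ∫ x in Ioo 0 b, p.eval x ^ 2 ∂powerMeasure ζ := by
  set C : ℝ := b ^ ζ * Real.exp (-(2 * ζ))
  have hC : 0 < C := by positivity
  filter_upwards [hr.bound (half_pos hC), eventually_ne_atTop 0] with n hn hn0 p hp hp0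
  have hpow : 0 < (n : ℝ) ^ (-(2 * ζ)) := by positivity
  calc r n ≤ C / 2 * (n : ℝ) ^ (-(2 * ζ)) := by
        rw [Real.norm_of_nonneg hpow.le] at hn
        exact (le_abs_self _).trans hn
    _ < C * (n : ℝ) ^ (-(2 * ζ)) := by gcongr; exact half_lt_self hC
    _ ≤ ∫ x in Ioo 0 b, p.eval x ^ 2 ∂powerMeasure ζ :=
        le_setIntegral_Ioo_sq_eval_powerMeasure hζ hb hn0 hp hp0

section PowerGrid

variable {ν : ℝ}

theorem antitone_natCast_add_one_rpow_neg (hν : 0 ≤ ν) :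
    Antitone fun k : ℕ => ((k : ℝ) + 1) ^ (-ν) := fun i j hij =>
  Real.rpow_le_rpow_of_nonpos (by positivity) (by gcongr) (neg_nonpos.2 hν)

theorem tendsto_natCast_add_one_rpow_neg (hν : 0 < ν) :
    Tendsto (fun k : ℕ => ((k : ℝ) + 1) ^ (-ν)) atTop (𝓝 0) :=
  (tendsto_rpow_neg_atTop hν).comp
    (tendsto_atTop_add_const_right _ _ tendsto_natCast_atTop_atTop)

theorem tendsto_natCast_add_one_rpow_succ_div (s : ℝ) :
    Tendsto (fun k : ℕ => (((k + 1 : ℕ) : ℝ) + 1) ^ s / ((k : ℝ) + 1) ^ s) atTop (𝓝 1) := by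
  have hbase : Tendsto (fun k : ℕ => 1 + 1 / ((k : ℝ) + 1)) atTop (𝓝 1) := by
    simpa using tendsto_one_div_add_atTop_nhds_zero_nat.const_add (1 : ℝ)
  have hpow := hbase.rpow_const (p := s) (Or.inl one_ne_zero)
  rw [Real.one_rpow] at hpow
  refine hpow.congr fun k => ?_
  rw [← Real.div_rpow (by positivity) (by positivity)]
  congr 1
  push_cast
  field_simp

theorem isLittleO_natCast_rpow_rpow {s t : ℝ} (hst : s < t) :
    (fun n : ℕ => (n : ℝ) ^ s) =o[atTop] fun n : ℕ => (n : ℝ) ^ t := by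
  refine Asymptotics.isLittleO_of_tendsto' ?_ ?_
  · filter_upwards [eventually_ne_atTop 0] with n hn h
    exact absurd h (by positivity)
  · refine ((tendsto_rpow_neg_atTop (sub_pos.2 hst)).comp tendsto_natCast_atTop_atTop).congr' ?_
    filter_upwards [eventually_ne_atTop 0] with n hn
    simp only [Function.comp_apply]
    rw [neg_sub, Real.rpow_sub (by positivity)]

end PowerGrid

theorem predefined_schedule_lower_bound_general {ζ : ℝ} (hζ : 0 < ζ) {a : ℕ → ℝ}
    (ha : Antitone a) (hpos : ∀ k, 0 < a k) (hlim : Tendsto a atTop (𝓝 0))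
    (hratio : Tendsto (fun k => a (k + 1) / a k) atTop (𝓝 1)) {r : ℕ → ℝ}
    (hr : r =o[atTop] fun n : ℕ => (n : ℝ) ^ (-(2 * ζ))) {q : ℕ → ℝ[X]}
    (hq : ∃ᶠ n in atTop, (q n).natDegree ≤ n ∧ (q n).eval 0 = 1) :
    ∃ (ρ : Measure ℝ) (_ : IsFiniteMeasure ρ) (lam : ℕ → ℝ),
      ρ (Ioc 0 (a 0))ᶜ = 0 ∧ (∀ k, 0 < lam k) ∧ Antitone lam ∧ ρ (range lam)ᶜ = 0 ∧
      Tendsto (fun k => lam k / a k) atTop (𝓝 1) ∧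
      Tendsto (fun l => ρ.real (Ioc 0 l) / l ^ ζ) (𝓝[>] 0) (𝓝 1) ∧
      ∃ᶠ n in atTop, r n < (1 / 2) * ∫ l, (q n).eval l ^ 2 ∂ρ := by
  have hμ : powerMeasure ζ (Ioo 0 (a 0)) ≠ ⊤ := powerMeasure_Ioo_ne_top hζ (hpos 0).le
  have hloss (b : ℝ) (hb : 0 < b) :
      ∃ᶠ n in atTop, 2 * r n < ∫ x in Ioo 0 b, (q n).eval x ^ 2 ∂powerMeasure ζ :=
    (hq.and_eventually (eventually_lt_setIntegral_Ioo_sq_eval hζ hb (hr.const_mul_left 2))).mono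
      fun n ⟨⟨hdeg, hq0⟩, hn⟩ => hn (q n) hdeg hq0
  obtain ⟨lam, hlam, hfreq⟩ := exists_nodes_frequently_lt_integral_quantize ha hpos hlim hμ
    (f := fun n x => (q n).eval x ^ 2) (fun n => (q n).continuous.pow 2)
    (fun _ _ => sq_nonneg _) hloss
  have hmem := mem_Ioc_of_forall_mem_Icc ha hpos hlam
  exact ⟨quantize (powerMeasure ζ) (gridCell a) lam,
    isFiniteMeasure_quantize_gridCell ha hpos hlim hμ, lam,
    quantize_compl_eq_zero measurableSet_Ioc hmem, fun k => (hmem k).1,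
    antitone_nat_of_succ_le fun k => (hlam (k + 1)).2.trans (hlam k).1,
    quantize_compl_eq_zero (countable_range lam).measurableSet mem_range_self,
    tendsto_div_of_forall_mem_Icc hpos hratio hlam,
    tendsto_quantize_powerMeasure_Ioc_div_rpow hζ ha hpos hlim hratio hlam,
    hfreq.mono fun n hn => by linarith⟩

/-- Lower bound for non-adaptive (predefined-schedule) first-order methods: for any
problem-independent sequence of residual polynomials `q_n` (degree ≤ n, `q_n(0)=1`)
there is a quadratic problem with eigenvalues `λ_k = k^{-ν}(1+o(1))` and spectral
measure `ρ((0,λ]) = λ^ζ(1+o(1))` on which the losses exceed `n^{-2ζ-ε}` infinitely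
often. (Here `lam k` denotes the eigenvalue `λ_{k+1}`.) -/
theorem predefined_schedule_lower_bound
    (ζ ν ε : ℝ) (hζ : 0 < ζ) (hν : 0 < ν) (hε : 0 < ε)
    (q : ℕ → Polynomial ℝ)
    (hdeg : ∀ n : ℕ, 1 ≤ n → (q n).natDegree ≤ n)
    (hq0 : ∀ n : ℕ, 1 ≤ n → (q n).eval 0 = 1) :
    ∃ (ρ : Measure ℝ) (_ : IsFiniteMeasure ρ) (lam : ℕ → ℝ),
      ρ (Set.Ioc (0:ℝ) 1)ᶜ = 0 ∧
      (∀ k, 0 < lam k) ∧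
      (∀ k, lam (k + 1) ≤ lam k) ∧
      ρ (Set.range lam)ᶜ = 0 ∧
      Tendsto (fun k : ℕ => lam k * ((k : ℝ) + 1) ^ ν) atTop (nhds 1) ∧
      Tendsto (fun l : ℝ => (ρ (Set.Ioc 0 l)).toReal / l ^ ζ)
        (nhdsWithin 0 (Set.Ioi 0)) (nhds 1) ∧
      {n : ℕ | 1 ≤ n ∧
        (n : ℝ) ^ (-(2 * ζ) - ε) < (1/2) * ∫ l, ((q n).eval l) ^ 2 ∂ρ}.Infinite := by
  obtain ⟨ρ, hfin, lam, hsupp, hpos, hanti, hrange, hlam, hρ, hfreq⟩ :=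
    predefined_schedule_lower_bound_general hζ (antitone_natCast_add_one_rpow_neg hν.le)
      (fun k => by positivity) (tendsto_natCast_add_one_rpow_neg hν)
      (tendsto_natCast_add_one_rpow_succ_div (-ν))
      (isLittleO_natCast_rpow_rpow (sub_lt_self (-(2 * ζ)) hε))
      (eventually_atTop.2 ⟨1, fun n hn => ⟨hdeg n hn, hq0 n hn⟩⟩).frequently
  refine ⟨ρ, hfin, lam, by simpa using hsupp, hpos, fun k => hanti k.le_succ, hrange,
    hlam.congr fun k => ?_, hρ,
    Nat.frequently_atTop_iff_infinite.1 ((eventually_ge_atTop 1).and_frequently hfreq)⟩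
  rw [Real.rpow_neg (by positivity), div_inv_eq_mul]
end
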